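/- Let X be a Banach space with a Schauder basis (e_i). If ‖s_1 + s_2‖ = 1 whenever (s_n) is a spreading model of any normalized block basis of (e_i), then X contains a closed infinite-dimensional subspace isomorphic to c₀. -/

import Mathlib

/-!
Let `C` be the basis constant, `y` the normalized basis, and call a set of indices bounded if the
sum of `y` over it has norm at most `2 * C`. It suffices to find an infinite set `N` all of whose
finite subsets are bounded: then `y` restricted to `N` satisfies an upper `c₀`-estimate, by testing
against functionals, and the lower estimate comes from the projections (`exists_c0_embedding`).

The hypothesis is used only through pairs. By Ramsey's theorem every normalized block basis has a
subsequence with a spreading model (`exists_spreading`), so among successive blocks of norm at most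
`B` some two have a sum of norm at most `B + δ` (`exists_pair`).

A front assigns to every increasing sequence `L` an initial segment, of length `p L`. If all sums
over the members of a front have norm at most `B`, then on a smaller infinite set the sums over two
successive members have norm at most `B + δ` (`Good.double`): the set of sequences violating this is
open, hence Ramsey by the Galvin-Nash-Williams theorem (`open_ramsey`), and the pair property
excludes that all sequences violate it. Doubling increases the rank of a front, and diagonalising
over countably many fronts passes to limits. By transfinite induction there are thus fronts of
arbitrarily large countable rank with bound at most `2` (`exists_dominating`). The induction is
carried out over the accessibility predicate of a well-founded relation instead of ordinals.

If no sequence in some infinite set had all its partial sums bounded by `2 * C`, the tree of finite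
sets with bounded sums would be well founded, so a front with bound `2` would exceed its rank. But
initial segments of members of that front have sums of norm at most `2 * C`, i.e. they lie in the
tree, a contradiction (`exists_bounded_seq`). One more application of Ramsey's theorem yields an
infinite set all of whose finite subsets are bounded (`exists_bounded_sums`).
-/

noncomputable section

/-- A basic sequence: there is a constant `C` dominating all projections onto
initial segments. -/
def IsBasicSeq {S : Type*} [NormedAddCommGroup S] [NormedSpace ℝ S] (s : ℕ → S) : Prop :=
  ∃ C : ℝ, ∀ m n : ℕ, m ≤ n → ∀ a : ℕ → ℝ,
    ‖∑ i ∈ Finset.range m, a i • s i‖ ≤ C * ‖∑ i ∈ Finset.range n, a i • s i‖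

/-- `s` is a spreading model of `x`. -/
def IsSpreadingModel {X : Type*} [NormedAddCommGroup X] [NormedSpace ℝ X]
    {S : Type*} [NormedAddCommGroup S] [NormedSpace ℝ S]
    (x : ℕ → X) (s : ℕ → S) : Prop :=
  IsBasicSeq s ∧
  ∃ ε : ℕ → ℝ, (∀ n, 0 < ε n) ∧ Antitone ε ∧ Filter.Tendsto ε Filter.atTop (nhds 0) ∧
    ∀ (n : ℕ) (a : Fin n → ℝ), (∀ i, |a i| ≤ 1) →
      ∀ k : Fin n → ℕ, StrictMono k → (∀ i, n ≤ k i) →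
        |‖∑ i, a i • x (k i)‖ - ‖∑ i, a i • s i‖| < ε n

/-- `e` is a Schauder basis of `X`: every vector has a unique representation as a
norm-convergent series. -/
def IsSchauderBasis {X : Type*} [NormedAddCommGroup X] [NormedSpace ℝ X] (e : ℕ → X) : Prop :=
  ∀ x : X, ∃! a : ℕ → ℝ,
    Filter.Tendsto (fun n => ∑ i ∈ Finset.range n, a i • e i) Filter.atTop (nhds x)

/-- `y` is a block basis of the basis `e`: `y j = ∑_{i ∈ E j} a i • e i` with the
finite sets `E j` nonempty and successive (`max E j < min E (j+1)`), and `y j ≠ 0`. -/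
def IsBlockBasis {X : Type*} [NormedAddCommGroup X] [NormedSpace ℝ X]
    (e : ℕ → X) (y : ℕ → X) : Prop :=
  ∃ (E : ℕ → Finset ℕ) (a : ℕ → ℝ),
    (∀ j, (E j).Nonempty) ∧
    (∀ j, ∀ p ∈ E j, ∀ q ∈ E (j + 1), p < q) ∧
    (∀ j, y j = ∑ i ∈ E j, a i • e i) ∧
    (∀ j, y j ≠ 0)

/-! ### Ramsey theory for open sets of increasing sequences -/

/-- `SeqIn L M`: the strictly increasing sequence `L` takes its values in `M`; such sequences
encode the infinite subsets of `M`. -/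
def SeqIn (L : ℕ → ℕ) (M : Set ℕ) : Prop := StrictMono L ∧ ∀ i, L i ∈ M

lemma SeqIn.mono {L : ℕ → ℕ} {M M' : Set ℕ} (h : SeqIn L M) (hM : M ⊆ M') : SeqIn L M' :=
  ⟨h.1, fun i => hM (h.2 i)⟩

lemma SeqIn.shift {L : ℕ → ℕ} {M : Set ℕ} (h : SeqIn L M) (k : ℕ) : SeqIn (fun i => L (i + k)) M :=
  ⟨fun _ _ hij => h.1 (by lia), fun i => h.2 _⟩

lemma SeqIn.infinite {L : ℕ → ℕ} {M : Set ℕ} (h : SeqIn L M) : M.Infinite :=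
  (Set.infinite_range_of_injective h.1.injective).mono (by rintro _ ⟨i, rfl⟩; exact h.2 i)

lemma exists_seqIn {M : Set ℕ} (hM : M.Infinite) : ∃ L, SeqIn L M :=
  ⟨Nat.nth (· ∈ M), Nat.nth_strictMono hM, fun i => Nat.nth_mem_of_infinite hM i⟩

lemma infinite_inter_Ioi {M : Set ℕ} (hM : M.Infinite) (n : ℕ) : (M ∩ Set.Ioi n).Infinite := by
  have h := hM.sdiff (Set.finite_Iic n)
  refine h.mono fun x hx => ⟨hx.1, ?_⟩
  simpa using hx.2

/-- Finitely many hereditary dense properties of infinite sets hold simultaneously on some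
infinite subset. -/
lemma finite_refine {ι : Type*} (J : Finset ι) (M₀ : Set ℕ) (P : ι → Set ℕ → Prop)
    (hmono : ∀ i M M', M' ⊆ M → P i M → P i M')
    (hex : ∀ i M, M ⊆ M₀ → M.Infinite → ∃ M' ⊆ M, M'.Infinite ∧ P i M')
    (M : Set ℕ) (hMM : M ⊆ M₀) (hM : M.Infinite) :
    ∃ M' ⊆ M, M'.Infinite ∧ ∀ i ∈ J, P i M' := by
  classical
  induction J using Finset.induction_on with
  | empty => exact ⟨M, le_rfl, hM, by simp⟩
  | insert a s _ ih =>
    obtain ⟨M1, h1, h2, h3⟩ := ih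
    obtain ⟨M2, h4, h5, h6⟩ := hex a M1 (h1.trans hMM) h2
    refine ⟨M2, h4.trans h1, h5, fun i hi => ?_⟩
    rcases Finset.mem_insert.1 hi with rfl | hi
    · exact h6
    · exact hmono _ _ _ h4 (h3 i hi)

/-- Diagonalisation: if each `P n` is hereditary and dense, some infinite set `M'` satisfies
`P n` beyond `n` for every `n ∈ M'`. -/
lemma fusion (M₀ : Set ℕ) (P : ℕ → Set ℕ → Prop)
    (hmono : ∀ i M M', M' ⊆ M → P i M → P i M')
    (hex : ∀ i M, M ⊆ M₀ → M.Infinite → ∃ M' ⊆ M, M'.Infinite ∧ P i M')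
    (M : Set ℕ) (hMM : M ⊆ M₀) (hM : M.Infinite) :
    ∃ M' ⊆ M, M'.Infinite ∧ ∀ n ∈ M', P n (M' ∩ Set.Ioi n) := by
  classical
  have step : ∀ A : {A : Set ℕ // A ⊆ M ∧ A.Infinite}, ∃ (n : ℕ) (B : {A : Set ℕ // A ⊆ M ∧ A.Infinite}),
      n ∈ A.1 ∧ B.1 ⊆ A.1 ∩ Set.Ioi n ∧ P n B.1 := by
    rintro ⟨A, hA, hA'⟩
    obtain ⟨n, hn⟩ := hA'.nonempty
    obtain ⟨B, hB, hB', hP⟩ := hex n (A ∩ Set.Ioi n)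
      ((Set.inter_subset_left.trans hA).trans hMM) (infinite_inter_Ioi hA' n)
    exact ⟨n, ⟨B, (hB.trans Set.inter_subset_left).trans hA, hB'⟩, hn, hB, hP⟩
  choose f g hf hg hP using step
  let A : ℕ → {A : Set ℕ // A ⊆ M ∧ A.Infinite} := fun k => Nat.rec ⟨M, le_rfl, hM⟩ (fun _ a => g a) k
  have hA : ∀ k, A (k + 1) = g (A k) := fun k => rfl
  have hanti : Antitone fun k => (A k).1 := antitone_nat_of_succ_le fun k => by
    rw [hA]; exact (hg (A k)).trans Set.inter_subset_left
  let m : ℕ → ℕ := fun k => f (A k)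
  have hm : ∀ k l, k < l → m l ∈ (A (k + 1)).1 := fun k l hkl =>
    hanti (show k + 1 ≤ l by lia) (hf (A l))
  have hmm : StrictMono m := fun k l hkl => (hg (A k) (hm k l hkl)).2
  refine ⟨Set.range m, ?_, Set.infinite_range_of_injective hmm.injective, ?_⟩
  · rintro _ ⟨k, rfl⟩
    exact (A k).2.1 (hf (A k))
  · rintro _ ⟨k, rfl⟩
    refine hmono _ _ _ ?_ (hP (A k))
    rintro _ ⟨⟨l, rfl⟩, hl⟩
    exact hm k l (hmm.lt_iff_lt.1 hl)

/-- Countable version of `finite_refine`: the properties hold beyond finite initial segments. -/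
lemma countable_refine {ι : Type*} [Countable ι] (P : ι → Set ℕ → Prop)
    (hmono : ∀ i M M', M' ⊆ M → P i M → P i M')
    (hex : ∀ i M, M.Infinite → ∃ M' ⊆ M, M'.Infinite ∧ P i M') :
    ∃ M : Set ℕ, M.Infinite ∧ ∀ i, ∃ K, P i (M ∩ Set.Ioi K) := by
  classical
  rcases isEmpty_or_nonempty ι with hι | hι
  · exact ⟨Set.univ, Set.infinite_univ, fun i => hι.elim i⟩
  obtain ⟨en, hen⟩ := exists_surjective_nat ι
  obtain ⟨M, -, hM, hP⟩ := fusion Set.univ (fun n N => ∀ j ∈ Finset.range (n + 1), P (en j) N)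
    (fun i M M' h hP j hj => hmono _ _ _ h (hP j hj))
    (fun i M _ hM => finite_refine _ Set.univ (fun j => P (en j)) (fun _ => hmono _)
      (fun j N _ hN => hex _ N hN) M (Set.subset_univ _) hM)
    Set.univ le_rfl Set.infinite_univ
  refine ⟨M, hM, fun i => ?_⟩
  obtain ⟨j, rfl⟩ := hen i
  obtain ⟨n, hn, hjn⟩ := hM.exists_gt j
  exact ⟨n, hP n hn j (Finset.mem_range.2 (by lia))⟩

/-- Accept: every increasing sequence that starts with the finite set `s` and continues
inside `N` belongs to `O`. -/
def Accepts (O : (ℕ → ℕ) → Prop) (s : Finset ℕ) (N : Set ℕ) : Prop :=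
  ∀ L, StrictMono L → (Finset.range s.card).image L = s → (∀ i, s.card ≤ i → L i ∈ N) → O L

/-- Reject: no infinite subset of `N` accepts `s`. -/
def Rejects (O : (ℕ → ℕ) → Prop) (s : Finset ℕ) (N : Set ℕ) : Prop :=
  ∀ N' ⊆ N, N'.Infinite → ¬ Accepts O s N'

lemma Accepts.mono {O : (ℕ → ℕ) → Prop} {s : Finset ℕ} {N N' : Set ℕ} (h : Accepts O s N)
    (hN : N' ⊆ N) : Accepts O s N' :=
  fun L h1 h2 h3 => h L h1 h2 fun i hi => hN (h3 i hi)

lemma Rejects.mono {O : (ℕ → ℕ) → Prop} {s : Finset ℕ} {N N' : Set ℕ} (h : Rejects O s N)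
    (hN : N' ⊆ N) : Rejects O s N' :=
  fun K h1 h2 => h K (h1.trans hN) h2

lemma Accepts.of_inter {O : (ℕ → ℕ) → Prop} {s : Finset ℕ} {N : Set ℕ} {n : ℕ} (hn : n ∈ s)
    (h : Accepts O s (N ∩ Set.Ioi n)) : Accepts O s N := by
  intro L h1 h2 h3
  refine h L h1 h2 fun i hi => ⟨h3 i hi, ?_⟩
  rw [← h2] at hn
  obtain ⟨j, hj, rfl⟩ := Finset.mem_image.1 hn
  exact h1 (lt_of_lt_of_le (Finset.mem_range.1 hj) hi)

lemma Rejects.of_inter {O : (ℕ → ℕ) → Prop} {s : Finset ℕ} {N : Set ℕ} {n : ℕ}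
    (h : Rejects O s (N ∩ Set.Ioi n)) : Rejects O s N := fun K h1 h2 h3 =>
  h (K ∩ Set.Ioi n) (Set.inter_subset_inter_left _ h1) (infinite_inter_Ioi h2 n)
    (h3.mono Set.inter_subset_left)

lemma decide_one (O : (ℕ → ℕ) → Prop) (s : Finset ℕ) (M : Set ℕ) (hM : M.Infinite) :
    ∃ M' ⊆ M, M'.Infinite ∧ (Accepts O s M' ∨ Rejects O s M') := by
  by_cases h : Rejects O s M
  · exact ⟨M, le_rfl, hM, Or.inr h⟩
  · simp only [Rejects, not_forall, not_not] at h
    obtain ⟨N, h1, h2, h3⟩ := h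
    exact ⟨N, h1, h2, Or.inl h3⟩

lemma eq_of_image_range_eq {L L' : ℕ → ℕ} (hL : StrictMono L) (hL' : StrictMono L') {p : ℕ}
    (h : (Finset.range p).image L' = (Finset.range p).image L) : ∀ i < p, L' i = L i := by
  classical
  have hc : ((Finset.range p).image L).card = p := by
    rw [Finset.card_image_of_injective _ hL.injective, Finset.card_range]
  have h1 := Finset.orderEmbOfFin_unique hc (f := fun i : Fin p => L i)
    (fun i => Finset.mem_image_of_mem _ (Finset.mem_range.2 i.2)) (fun i j hij => hL hij)
  have h2 := Finset.orderEmbOfFin_unique hc (f := fun i : Fin p => L' i)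
    (fun i => h ▸ Finset.mem_image_of_mem _ (Finset.mem_range.2 i.2)) (fun i j hij => hL' hij)
  intro i hi
  exact congrFun (h2.trans h1.symm) ⟨i, hi⟩

/-- The Galvin-Nash-Williams theorem: an open set of increasing sequences is Ramsey. The proof
is the accept/reject argument. -/
theorem open_ramsey_univ (O : (ℕ → ℕ) → Prop)
    (hO : ∀ L, StrictMono L → O L → ∃ p, ∀ L', StrictMono L' → (∀ i < p, L' i = L i) → O L')
    (M : Set ℕ) (hM : M.Infinite) :
    ∃ N ⊆ M, N.Infinite ∧ ((∀ L, SeqIn L N → O L) ∨ (∀ L, SeqIn L N → ¬ O L)) := by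
  classical
  obtain ⟨N1, hN1M, hN1, hd1⟩ := decide_one O ∅ M hM
  obtain ⟨N2, hN21, hN2, hd2⟩ := fusion Set.univ
    (fun n N => ∀ s ∈ (Finset.range (n + 1)).powerset, Accepts O s N ∨ Rejects O s N)
    (fun i M M' h hP s hs => (hP s hs).imp (·.mono h) (·.mono h))
    (fun i M _ hM => finite_refine _ Set.univ (fun s N => Accepts O s N ∨ Rejects O s N)
      (fun s M M' h hP => hP.imp (·.mono h) (·.mono h))
      (fun s N _ hN => decide_one O s N hN) M (Set.subset_univ _) hM) N1 (Set.subset_univ _) hN1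
  have hdec : ∀ s : Finset ℕ, (↑s : Set ℕ) ⊆ N2 → Accepts O s N2 ∨ Rejects O s N2 := by
    intro s hs
    rcases s.eq_empty_or_nonempty with rfl | hne
    · exact hd1.imp (·.mono hN21) (·.mono hN21)
    · have hmem := s.max'_mem hne
      refine (hd2 (s.max' hne) (hs hmem) s ?_).imp (·.of_inter hmem) (·.of_inter)
      exact Finset.mem_powerset.2 fun x hx => Finset.mem_range.2
        (Nat.lt_succ_of_le (s.le_max' x hx))
  rcases hdec ∅ (by simp) with hacc | hrej
  · exact ⟨N2, hN21.trans hN1M, hN2, Or.inl fun L hL => hacc L hL.1 (by simp) fun i _ => hL.2 i⟩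
  let B : Finset ℕ → Set ℕ := fun s => {n | n ∈ N2 ∧ (∀ m ∈ s, m < n) ∧ Accepts O (insert n s) N2}
  have hB : ∀ s, Rejects O s N2 → (B s).Finite := by
    intro s hs
    by_contra hinf
    refine hs (B s) (fun n hn => hn.1) hinf ?_
    intro L h1 h2 h3
    obtain ⟨-, hlt, ha⟩ := h3 s.card le_rfl
    have hns : L s.card ∉ s := fun hm => lt_irrefl _ (hlt _ hm)
    have hcard : (insert (L s.card) s).card = s.card + 1 := Finset.card_insert_of_notMem hns
    refine ha L h1 ?_ ?_
    · rw [hcard, Finset.range_add_one, Finset.image_insert, h2]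
    · intro i hi
      rw [hcard] at hi
      exact (h3 i (by lia)).1
  obtain ⟨N3, hN32, hN3, hd3⟩ := fusion Set.univ
    (fun n N => ∀ s ∈ (Finset.range (n + 1)).powerset, Rejects O s N2 → ∀ m ∈ N, m ∉ B s)
    (fun i M M' h hP s hs hr m hm => hP s hs hr m (h hm))
    (fun i M _ hM => finite_refine _ Set.univ (fun s N => Rejects O s N2 → ∀ m ∈ N, m ∉ B s)
      (fun s M M' h hP hr m hm => hP hr m (h hm))
      (fun s N _ hN => by
        by_cases hr : Rejects O s N2
        · exact ⟨N \ B s, Set.sdiff_subset, hN.sdiff (hB s hr), fun _ m hm => hm.2⟩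
        · exact ⟨N, le_rfl, hN, fun h => absurd h hr⟩) M (Set.subset_univ _) hM)
    (N2 \ B ∅) (Set.subset_univ _) (hN2.sdiff (hB ∅ hrej))
  have hallrej : ∀ s : Finset ℕ, (↑s : Set ℕ) ⊆ N3 → Rejects O s N2 := by
    intro s
    induction s using Finset.induction_on_max with
    | empty => exact fun _ => hrej
    | insert a s hlt ih =>
      intro hs
      rw [Finset.coe_insert, Set.insert_subset_iff] at hs
      have hr := ih hs.2
      have ha : a ∉ B s := by
        rcases s.eq_empty_or_nonempty with rfl | hne
        · exact (hN32 hs.1).2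
        · have hmem := s.max'_mem hne
          refine hd3 (s.max' hne) (hs.2 hmem) s ?_ hr a ⟨hs.1, hlt _ hmem⟩
          exact Finset.mem_powerset.2 fun x hx => Finset.mem_range.2
            (Nat.lt_succ_of_le (s.le_max' x hx))
      refine (hdec (insert a s) ?_).resolve_left fun hacc => ha ⟨(hN32 hs.1).1, hlt, hacc⟩
      rw [Finset.coe_insert, Set.insert_subset_iff]
      exact ⟨(hN32 hs.1).1, fun x hx => (hN32 (hs.2 hx)).1⟩
  have hN3M : N3 ⊆ N2 := fun x hx => (hN32 hx).1
  refine ⟨N3, hN3M.trans (hN21.trans hN1M), hN3, Or.inr fun L hL hOL => ?_⟩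
  obtain ⟨p, hp⟩ := hO L hL.1 hOL
  have hc : ((Finset.range p).image L).card = p := by
    rw [Finset.card_image_of_injective _ hL.1.injective, Finset.card_range]
  refine hallrej ((Finset.range p).image L) ?_ N3 hN3M hN3 ?_
  · intro x hx
    obtain ⟨i, -, rfl⟩ := Finset.mem_image.1 (Finset.mem_coe.1 hx)
    exact hL.2 i
  · intro L' h1 h2 _
    rw [hc] at h2
    exact hp L' h1 (eq_of_image_range_eq hL.1 h1 h2)

/-- `open_ramsey_univ` for a property that is only known to be open on the sequences in `M`. -/
theorem open_ramsey (O : (ℕ → ℕ) → Prop) (M : Set ℕ) (hM : M.Infinite)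
    (hO : ∀ L, SeqIn L M → O L → ∃ p, ∀ L', SeqIn L' M → (∀ i < p, L' i = L i) → O L') :
    ∃ N ⊆ M, N.Infinite ∧ ((∀ L, SeqIn L N → O L) ∨ (∀ L, SeqIn L N → ¬ O L)) := by
  obtain ⟨N, h1, h2, h3⟩ := open_ramsey_univ (fun L => SeqIn L M → O L) (by
    intro L hL hOL
    by_cases hs : SeqIn L M
    · obtain ⟨p, hp⟩ := hO L hs (hOL hs)
      exact ⟨p, fun L' _ h hs' => hp L' hs' h⟩
    · have : ∃ k, L k ∉ M := by
        by_contra hcon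
        push Not at hcon
        exact hs ⟨hL, hcon⟩
      obtain ⟨k, hk⟩ := this
      refine ⟨k + 1, fun L' _ h hs' => absurd (hs'.2 k) ?_⟩
      rw [h k (by lia)]
      exact hk) M hM
  refine ⟨N, h1, h2, h3.imp (fun h L hL => h L hL (hL.mono h1)) fun h L hL hOL => ?_⟩
  exact h L hL fun _ => hOL

/-! ### The basis constant -/

/-- A Schauder basis of a Banach space has a finite basis constant. The map sending a convergent
sequence of partial sums (an element of a closed subspace of `C(OnePoint ℕ, X)`) to its limit is
onto, so the open mapping theorem applies. -/
lemma exists_basis_const {X : Type*} [NormedAddCommGroup X] [NormedSpace ℝ X] [CompleteSpace X]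
    {e : ℕ → X} (he : IsSchauderBasis e) :
    ∃ C : ℝ, 0 < C ∧ ∀ (m n : ℕ) (b : ℕ → ℝ), m ≤ n →
      ‖∑ i ∈ Finset.range m, b i • e i‖ ≤ C * ‖∑ i ∈ Finset.range n, b i • e i‖ := by
  classical
  let Y : Submodule ℝ C(OnePoint ℕ, X) :=
    { carrier := {u | u ((0 : ℕ) : OnePoint ℕ) = 0 ∧ ∀ n : ℕ,
        u ((n + 1 : ℕ) : OnePoint ℕ) - u (n : OnePoint ℕ) ∈ Submodule.span ℝ {e n}}
      zero_mem' := by simp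
      add_mem' := by
        rintro u v ⟨hu, hu'⟩ ⟨hv, hv'⟩
        refine ⟨by simp [hu, hv], fun n => ?_⟩
        have := Submodule.add_mem _ (hu' n) (hv' n)
        simpa [add_sub_add_comm] using this
      smul_mem' := by
        rintro c u ⟨hu, hu'⟩
        refine ⟨by simp [hu], fun n => ?_⟩
        have := Submodule.smul_mem _ c (hu' n)
        simpa [smul_sub] using this }
  have hYc : IsClosed (Y : Set C(OnePoint ℕ, X)) := by
    have : (Y : Set C(OnePoint ℕ, X)) = {u | u ((0 : ℕ) : OnePoint ℕ) = 0} ∩ ⋂ n : ℕ,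
        {u | u ((n + 1 : ℕ) : OnePoint ℕ) - u (n : OnePoint ℕ) ∈ Submodule.span ℝ {e n}} := by
      ext u; simp [Y]
    rw [this]
    refine (isClosed_singleton.preimage (continuous_eval_const _)).inter
      (isClosed_iInter fun n => ?_)
    exact (Submodule.closed_of_finiteDimensional (Submodule.span ℝ {e n})).preimage
      ((continuous_eval_const ((n + 1 : ℕ) : OnePoint ℕ)).sub
        (continuous_eval_const ((n : ℕ) : OnePoint ℕ)))
  have : CompleteSpace Y := hYc.completeSpace_coe
  let ev : Y →L[ℝ] X := (ContinuousMap.evalCLM ℝ (OnePoint.infty : OnePoint ℕ)).comp Y.subtypeL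
  have hev : ∀ u : Y, ev u = u.1 OnePoint.infty := fun u => rfl
  have hsurj : Function.Surjective ev := by
    intro x
    obtain ⟨a, ha, -⟩ := he x
    refine ⟨⟨OnePoint.continuousMapMkNat _ x ha, ?_, fun n => ?_⟩, ?_⟩
    · exact Finset.sum_range_zero fun i => a i • e i
    · change ∑ i ∈ Finset.range (n + 1), a i • e i - ∑ i ∈ Finset.range n, a i • e i ∈ _
      rw [Finset.sum_range_succ, add_sub_cancel_left]
      exact Submodule.smul_mem _ _ (Submodule.mem_span_singleton_self _)
    · rfl
  obtain ⟨C, hC, hpre⟩ := ev.exists_preimage_norm_le hsurj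
  refine ⟨C, hC, fun m n b hmn => ?_⟩
  obtain ⟨u, hux, hun⟩ := hpre (∑ i ∈ Finset.range n, b i • e i)
  have hc : ∀ k : ℕ, ∃ c : ℝ, c • e k = u.1 ((k + 1 : ℕ) : OnePoint ℕ) - u.1 (k : OnePoint ℕ) :=
    fun k => Submodule.mem_span_singleton.1 (u.2.2 k)
  choose c hc using hc
  have hsum : ∀ k : ℕ, ∑ i ∈ Finset.range k, c i • e i = u.1 (k : OnePoint ℕ) := by
    intro k
    induction k with
    | zero => simpa using u.2.1.symm
    | succ k ih => rw [Finset.sum_range_succ, ih, hc]; abel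
  have hlim : Filter.Tendsto (fun k : ℕ => ∑ i ∈ Finset.range k, c i • e i) Filter.atTop
      (nhds (∑ i ∈ Finset.range n, b i • e i)) := by
    simp only [hsum, ← hux, hev]
    exact (OnePoint.continuous_iff_from_nat _).1 u.1.continuous
  have hlim' : Filter.Tendsto (fun k : ℕ => ∑ i ∈ Finset.range k, (if i < n then b i else 0) • e i)
      Filter.atTop (nhds (∑ i ∈ Finset.range n, b i • e i)) := by
    refine tendsto_const_nhds.congr' ?_
    filter_upwards [Filter.eventually_ge_atTop n] with k hk
    rw [← Finset.sum_subset (Finset.range_mono hk)]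
    · refine Finset.sum_congr rfl fun i hi => ?_
      rw [if_pos (Finset.mem_range.1 hi)]
    · intro i _ hi
      rw [if_neg (by simpa using hi), zero_smul]
  have hcb := (he _).unique hlim hlim'
  have hm : ∑ i ∈ Finset.range m, b i • e i = u.1 (m : OnePoint ℕ) := by
    rw [← hsum, hcb]
    refine Finset.sum_congr rfl fun i hi => ?_
    simp only [if_pos ((Finset.mem_range.1 hi).trans_le hmn)]
  rw [hm]
  exact (u.1.norm_coe_le_norm _).trans hun

lemma basis_ne_zero {X : Type*} [NormedAddCommGroup X] [NormedSpace ℝ X]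
    {e : ℕ → X} (he : IsSchauderBasis e) (i : ℕ) : e i ≠ 0 := by
  intro h0
  have h := (he 0).unique (y₁ := 0) (y₂ := Pi.single i 1) (by simp) (by
    have : ∀ n, ∑ j ∈ Finset.range n, (Pi.single i (1 : ℝ) : ℕ → ℝ) j • e j = 0 := fun n =>
      Finset.sum_eq_zero fun j _ => by
        rcases eq_or_ne j i with rfl | hj
        · simp [h0]
        · simp [hj]
    simp [this])
  have := congrFun h i
  simp at this

lemma block_lt {E : ℕ → Finset ℕ} (hne : ∀ j, (E j).Nonempty)
    (hlt : ∀ j, ∀ p ∈ E j, ∀ q ∈ E (j + 1), p < q) :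
    ∀ i j, i < j → ∀ p ∈ E i, ∀ q ∈ E j, p < q := by
  intro i j hij
  induction j, hij using Nat.le_induction with
  | base => exact hlt i
  | succ j _ ih =>
    intro p hp q hq
    obtain ⟨r, hr⟩ := hne j
    exact (ih p hp r hr).trans (hlt j r hr q hq)

/-- The partial sum projections of a block basis are bounded by the basis constant. -/
lemma block_const {X : Type*} [NormedAddCommGroup X] [NormedSpace ℝ X]
    {e : ℕ → X} {C : ℝ}
    (hC : ∀ (m n : ℕ) (b : ℕ → ℝ), m ≤ n →
      ‖∑ i ∈ Finset.range m, b i • e i‖ ≤ C * ‖∑ i ∈ Finset.range n, b i • e i‖)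
    {u : ℕ → X} (hu : IsBlockBasis e u) (m n : ℕ) (c : ℕ → ℝ) (hmn : m ≤ n) :
    ‖∑ i ∈ Finset.range m, c i • u i‖ ≤ C * ‖∑ i ∈ Finset.range n, c i • u i‖ := by
  classical
  obtain ⟨E, a, hne, hlt, hsum, -⟩ := hu
  have hlt' := block_lt hne hlt
  let T : ℕ → ℕ := fun k => (E k).min' (hne k)
  let b : ℕ → ℝ := fun t => ∑ i ∈ Finset.range n, if t ∈ E i then c i * a t else 0
  have key : ∀ k ≤ n, ∑ t ∈ Finset.range (T k), b t • e t = ∑ i ∈ Finset.range k, c i • u i := by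
    intro k hk
    simp only [b, Finset.sum_smul]
    rw [Finset.sum_comm, ← Finset.sum_subset (Finset.range_mono hk)]
    · refine Finset.sum_congr rfl fun i hi => ?_
      simp only [ite_smul, zero_smul]
      rw [hsum, ← Finset.sum_filter, Finset.smul_sum]
      have : (Finset.range (T k)).filter (· ∈ E i) = E i := by
        ext t
        simp only [Finset.mem_filter, Finset.mem_range, and_iff_right_iff_imp]
        exact fun ht => hlt' i k (Finset.mem_range.1 hi) t ht _ ((E k).min'_mem _)
      rw [this]
      exact Finset.sum_congr rfl fun t _ => by rw [mul_smul]
    · intro i _ hi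
      refine Finset.sum_eq_zero fun t ht => ?_
      rw [if_neg, zero_smul]
      intro hti
      have hki : k ≤ i := by simpa using hi
      rcases hki.eq_or_lt with rfl | hki
      · exact absurd ((E k).min'_le t hti) (not_le.2 (Finset.mem_range.1 ht))
      · have := hlt' k i hki _ ((E k).min'_mem (hne k)) t hti
        exact absurd (Finset.mem_range.1 ht) (by simp only [T]; lia)
  have hT : T m ≤ T n := by
    rcases hmn.eq_or_lt with rfl | h
    · exact le_rfl
    · exact (hlt' m n h _ ((E m).min'_mem _) _ ((E n).min'_mem _)).le
  rw [← key m hmn, ← key n le_rfl]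
  exact hC _ _ _ hT

lemma IsBlockBasis.comp {X : Type*} [NormedAddCommGroup X] [NormedSpace ℝ X]
    {e u : ℕ → X} (hu : IsBlockBasis e u) {φ : ℕ → ℕ} (hφ : StrictMono φ) :
    IsBlockBasis e (u ∘ φ) := by
  obtain ⟨E, a, hne, hlt, hsum, h0⟩ := hu
  exact ⟨E ∘ φ, a, fun j => hne _, fun j => block_lt hne hlt _ _ (hφ (Nat.lt_succ_self j)),
    fun j => hsum _, fun j => h0 _⟩

/-! ### Existence of spreading models -/

open Filter Topology in
/-- The filter of strictly increasing sequences whose first term tends to infinity. -/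
def farSeq : Filter (ℕ → ℕ) := comap (fun k => k 0) atTop ⊓ 𝓟 {k | StrictMono k}

lemma eventually_farSeq {P : (ℕ → ℕ) → Prop} :
    (∀ᶠ k in farSeq, P k) ↔ ∃ K, ∀ k, StrictMono k → K ≤ k 0 → P k := by
  rw [farSeq, Filter.eventually_inf_principal, Filter.eventually_comap, Filter.eventually_atTop]
  constructor
  · rintro ⟨K, h⟩
    exact ⟨K, fun k hk h0 => h _ h0 k rfl hk⟩
  · rintro ⟨K, h⟩
    exact ⟨K, fun b hb k hk hs => h k hs (by rw [hk]; exact hb)⟩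

instance : farSeq.NeBot := by
  rw [← Filter.forall_mem_nonempty_iff_neBot]
  intro s hs
  obtain ⟨K, hK⟩ := eventually_farSeq.1 (show ∀ᶠ k in farSeq, k ∈ s from hs)
  exact ⟨fun i => K + i, hK _ (fun i j h => by simpa using h) (by simp)⟩

/-- The vector with coefficients `f` on the subsequence `x ∘ k`. -/
abbrev lc {X : Type*} [NormedAddCommGroup X] [NormedSpace ℝ X] (x : ℕ → X) (k : ℕ → ℕ)
    (f : ℕ →₀ ℝ) : X := Finsupp.linearCombination ℝ (x ∘ k) f

lemma norm_lc_le {X : Type*} [NormedAddCommGroup X] [NormedSpace ℝ X] {x : ℕ → X}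
    (hx : ∀ i, ‖x i‖ = 1) (k : ℕ → ℕ) (f : ℕ →₀ ℝ) : ‖lc x k f‖ ≤ ∑ i ∈ f.support, |f i| := by
  rw [lc, Finsupp.linearCombination_apply, Finsupp.sum]
  refine (norm_sum_le _ _).trans (Finset.sum_le_sum fun i _ => ?_)
  rw [norm_smul, Function.comp, hx, mul_one, Real.norm_eq_abs]

lemma exists_rat_approx (f : ℕ →₀ ℝ) {η : ℝ} (hη : 0 < η) :
    ∃ g : ℕ →₀ ℚ, ∑ i ∈ (f - g.mapRange (Rat.cast : ℚ → ℝ) Rat.cast_zero).support,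
      |(f - g.mapRange (Rat.cast : ℚ → ℝ) Rat.cast_zero) i| < η := by
  classical
  set N : ℝ := (f.support.card : ℝ) + 1
  have hN : 0 < N := by positivity
  have hq : ∀ r : ℝ, ∃ q : ℚ, |r - q| < η / N := by
    intro r
    obtain ⟨q, h1, h2⟩ := exists_rat_btwn (show r < r + η / N by linarith [div_pos hη hN])
    exact ⟨q, by rw [abs_lt]; constructor <;> linarith⟩
  choose q hq using hq
  let g : ℕ →₀ ℚ := Finsupp.onFinset f.support (fun i => if i ∈ f.support then q (f i) else 0)
    (fun i h => by by_contra h'; exact h (if_neg h'))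
  refine ⟨g, ?_⟩
  have hsupp : (f - g.mapRange (Rat.cast : ℚ → ℝ) Rat.cast_zero).support ⊆ f.support := by
    intro i hi
    by_contra h'
    rw [Finsupp.mem_support_iff] at hi
    apply hi
    have h0 : f i = 0 := by simpa using h'
    simp [g, h0]
  calc _ ≤ ∑ i ∈ f.support, |(f - g.mapRange (Rat.cast : ℚ → ℝ) Rat.cast_zero) i| :=
        Finset.sum_le_sum_of_subset_of_nonneg hsupp fun _ _ _ => abs_nonneg _
    _ ≤ ∑ i ∈ f.support, η / N := by
        refine Finset.sum_le_sum fun i hi => ?_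
        have h0 : f i ≠ 0 := by simpa using hi
        have := (hq (f i)).le
        simpa [g, h0] using this
    _ = f.support.card * (η / N) := by rw [Finset.sum_const, nsmul_eq_mul]
    _ < η := by
        rw [mul_div_assoc', div_lt_iff₀ hN]
        simp only [N]; nlinarith

/-- By Ramsey's theorem, some subsequence has an asymptotic norm for every finite family
of coefficients. -/
lemma exists_asymptotic {X : Type*} [NormedAddCommGroup X] [NormedSpace ℝ X] {x : ℕ → X}
    (hx : ∀ i, ‖x i‖ = 1) : ∃ φ : ℕ → ℕ, StrictMono φ ∧ ∀ f : ℕ →₀ ℝ, ∃ l : ℝ,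
      Filter.Tendsto (fun k => ‖lc (x ∘ φ) k f‖) farSeq (nhds l) := by
  classical
  let R : (ℕ →₀ ℚ) → (ℕ →₀ ℝ) := fun g => g.mapRange (Rat.cast : ℚ → ℝ) Rat.cast_zero
  obtain ⟨M, hM, hP⟩ := countable_refine (ι := (ℕ →₀ ℚ) × ℚ)
    (fun i N => (∀ L, SeqIn L N → ‖lc x L (R i.1)‖ < i.2) ∨ (∀ L, SeqIn L N → ¬ ‖lc x L (R i.1)‖ < i.2))
    (fun i M M' h hP => hP.imp (fun h' L hL => h' L (hL.mono h)) (fun h' L hL => h' L (hL.mono h)))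
    (fun i M hM => open_ramsey (fun L => ‖lc x L (R i.1)‖ < i.2) M hM (by
      intro L _ hL
      refine ⟨(R i.1).support.sup id + 1, fun L' _ hLL => ?_⟩
      have : lc x L' (R i.1) = lc x L (R i.1) := by
        simp only [lc, Finsupp.linearCombination_apply, Finsupp.sum]
        refine Finset.sum_congr rfl fun j hj => ?_
        rw [Function.comp, Function.comp, hLL j (Nat.lt_succ_of_le (Finset.le_sup (f := id) hj))]
      rw [this]
      exact hL))
  obtain ⟨φ, hφ⟩ := exists_seqIn hM
  refine ⟨φ, hφ.1, fun f => ?_⟩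
  have hcomp : ∀ k f, lc (x ∘ φ) k f = lc x (φ ∘ k) f := fun k f => rfl
  -- homogeneity for the rational data, in filter form
  have hhom : ∀ (g : ℕ →₀ ℚ) (q : ℚ), (∀ᶠ k in farSeq, ‖lc (x ∘ φ) k (R g)‖ < q) ∨
      (∀ᶠ k in farSeq, (q : ℝ) ≤ ‖lc (x ∘ φ) k (R g)‖) := by
    intro g q
    obtain ⟨K, hK⟩ := hP (g, q)
    have hin : ∀ k, StrictMono k → K + 1 ≤ k 0 → SeqIn (φ ∘ k) (M ∩ Set.Ioi K) := by
      intro k hk h0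
      refine ⟨hφ.1.comp hk, fun i => ⟨hφ.2 _, ?_⟩⟩
      have h1 := hφ.1.le_apply (x := k i)
      have h2 := hk.monotone (Nat.zero_le i)
      simp only [Function.comp, Set.mem_Ioi]
      lia
    refine hK.imp (fun h => ?_) (fun h => ?_)
    · exact eventually_farSeq.2 ⟨K + 1, fun k hk h0 => h _ (hin k hk h0)⟩
    · exact eventually_farSeq.2 ⟨K + 1, fun k hk h0 => not_lt.1 (h _ (hin k hk h0))⟩
  -- for rational coefficients the norms converge
  have hrat : ∀ g : ℕ →₀ ℚ, ∃ l : ℝ, Filter.Tendsto (fun k => ‖lc (x ∘ φ) k (R g)‖) farSeq (nhds l) := by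
    intro g
    have h := @tendsto_of_no_upcrossings ℝ (ℕ → ℕ) _ _ _ _ farSeq
      (fun k => ‖lc (x ∘ φ) k (R g)‖) (Set.range ((↑) : ℚ → ℝ)) Rat.isDenseEmbedding_coe_real.dense (by
        rintro _ ⟨a, rfl⟩ _ ⟨b, rfl⟩ hab ⟨h1, h2⟩
        rcases hhom g b with h | h
        · obtain ⟨k, hk, hk'⟩ := (h2.and_eventually h).exists
          exact lt_asymm hk hk'
        · obtain ⟨k, hk, hk'⟩ := (h1.and_eventually h).exists
          exact absurd (hk.trans (hab.trans_le hk')) (lt_irrefl _))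
      (Filter.isBoundedUnder_of ⟨_, fun k => norm_lc_le (fun i => hx _) k _⟩)
      (Filter.isBoundedUnder_of ⟨0, fun k => norm_nonneg _⟩)
    exact h
  refine cauchy_map_iff_exists_tendsto.1 ?_
  rw [Metric.cauchy_iff]
  refine ⟨inferInstance, fun η hη => ?_⟩
  obtain ⟨g, hg⟩ := exists_rat_approx f (show 0 < η / 4 by positivity)
  obtain ⟨l, hl⟩ := hrat g
  refine ⟨Metric.ball l (η / 2), ?_, ?_⟩
  · have h1 := hl (Metric.ball_mem_nhds l (show 0 < η / 4 by positivity))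
    refine Filter.mem_map.2 (Filter.mem_of_superset (Filter.mem_map.1 h1) fun k hk => ?_)
    simp only [Set.mem_preimage, Metric.mem_ball, Real.dist_eq] at hk ⊢
    have h2 : |‖lc (x ∘ φ) k f‖ - ‖lc (x ∘ φ) k (R g)‖| < η / 4 := by
      refine (abs_norm_sub_norm_le _ _).trans_lt ?_
      rw [← map_sub]
      exact (norm_lc_le (fun i => hx _) k _).trans_lt hg
    rw [abs_lt] at *
    constructor <;> linarith
  · intro a ha b hb
    rw [Metric.mem_ball, Real.dist_eq, abs_lt] at *
    constructor <;> linarith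

/-- Every seminorm on the finitely supported sequences is induced by a map to a Banach space. -/
lemma exists_banach_of_seminorm (N : Seminorm ℝ (ℕ →₀ ℝ)) :
    ∃ (S : Type) (_ : NormedAddCommGroup S) (_ : NormedSpace ℝ S) (_ : CompleteSpace S)
      (J : (ℕ →₀ ℝ) →ₗ[ℝ] S), ∀ f, ‖J f‖ = N f := by
  let i1 : SeminormedAddCommGroup (ℕ →₀ ℝ) := N.toAddGroupSeminorm.toSeminormedAddCommGroup
  let i2 : NormedSpace ℝ (ℕ →₀ ℝ) := ⟨fun a b => (map_smul_eq_mul N a b).le⟩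
  refine ⟨UniformSpace.Completion (ℕ →₀ ℝ), inferInstance, inferInstance, inferInstance,
    (UniformSpace.Completion.toComplL (𝕜 := ℝ) (E := ℕ →₀ ℝ)).toLinearMap, fun f => ?_⟩
  exact UniformSpace.Completion.norm_coe f

/-- The coefficient sequence `a 0, …, a (n - 1), 0, 0, …`. -/
def coeffs {n : ℕ} (a : Fin n → ℝ) : ℕ →₀ ℝ := ∑ i : Fin n, Finsupp.single (i : ℕ) (a i)

lemma map_coeffs {Y : Type*} [AddCommGroup Y] [Module ℝ Y] (J : (ℕ →₀ ℝ) →ₗ[ℝ] Y) {n : ℕ}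
    (a : Fin n → ℝ) : J (coeffs a) = ∑ i : Fin n, a i • J (Finsupp.single (i : ℕ) 1) := by
  rw [coeffs, map_sum]
  refine Finset.sum_congr rfl fun i _ => ?_
  rw [← map_smul, Finsupp.smul_single, smul_eq_mul, mul_one]

lemma lc_coeffs {X : Type*} [NormedAddCommGroup X] [NormedSpace ℝ X] (x : ℕ → X) (k : ℕ → ℕ)
    {n : ℕ} (a : Fin n → ℝ) : lc x k (coeffs a) = ∑ i : Fin n, a i • x (k i) := by
  rw [lc, map_coeffs]
  simp

lemma coeffs_sub {n : ℕ} (a b : Fin n → ℝ) : coeffs (a - b) = coeffs a - coeffs b := by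
  simp [coeffs, Finset.sum_sub_distrib]

lemma norm_lc_coeffs_le {X : Type*} [NormedAddCommGroup X] [NormedSpace ℝ X] {x : ℕ → X}
    (hx : ∀ i, ‖x i‖ = 1) (k : ℕ → ℕ) {n : ℕ} (a : Fin n → ℝ) :
    ‖lc x k (coeffs a)‖ ≤ n * ‖a‖ := by
  rw [lc_coeffs]
  refine (norm_sum_le _ _).trans ?_
  calc _ ≤ ∑ _i : Fin n, ‖a‖ := Finset.sum_le_sum fun i _ => by
        rw [norm_smul, hx, mul_one]; exact norm_le_pi_norm a i
    _ = _ := by simp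

/-- The asymptotic norm is attained uniformly over bounded coefficients of given length,
because the unit cube of `ℝⁿ` is compact. -/
lemma exists_uniform {X : Type*} [NormedAddCommGroup X] [NormedSpace ℝ X] {x : ℕ → X}
    (hx : ∀ i, ‖x i‖ = 1) (N : (ℕ →₀ ℝ) → ℝ)
    (hN : ∀ f, Filter.Tendsto (fun k => ‖lc x k f‖) farSeq (nhds (N f))) (n : ℕ) {η : ℝ}
    (hη : 0 < η) : ∃ K, ∀ k, StrictMono k → K ≤ k 0 → ∀ a : Fin n → ℝ, ‖a‖ ≤ 1 →
      |‖lc x k (coeffs a)‖ - N (coeffs a)| < η := by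
  have hlip : ∀ (k : ℕ → ℕ) (a b : Fin n → ℝ),
      |‖lc x k (coeffs a)‖ - ‖lc x k (coeffs b)‖| ≤ n * ‖a - b‖ := by
    intro k a b
    refine (abs_norm_sub_norm_le _ _).trans ?_
    rw [← map_sub, ← coeffs_sub]
    exact norm_lc_coeffs_le hx k _
  have hlipN : ∀ (a b : Fin n → ℝ), |N (coeffs a) - N (coeffs b)| ≤ n * ‖a - b‖ := fun a b =>
    le_of_tendsto ((hN (coeffs a)).sub (hN (coeffs b))).abs
      (Filter.Eventually.of_forall fun k => hlip k a b)
  set δ : ℝ := η / (4 * (n + 1))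
  have hδ : 0 < δ := by positivity
  have hnδ : n * δ < η / 4 := by
    simp only [δ]
    rw [mul_div_assoc', div_lt_div_iff₀ (by positivity) (by positivity)]
    nlinarith
  obtain ⟨t, -, htf, htc⟩ := (isCompact_closedBall (0 : Fin n → ℝ) 1).finite_cover_balls hδ
  have hev : ∀ᶠ k in farSeq, ∀ b ∈ t, |‖lc x k (coeffs b)‖ - N (coeffs b)| < η / 4 := by
    rw [Filter.eventually_all_finite htf]
    intro b _
    have := Metric.tendsto_nhds.1 (hN (coeffs b)) (η / 4) (by positivity)
    simpa only [Real.dist_eq] using this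
  obtain ⟨K, hK⟩ := eventually_farSeq.1 hev
  refine ⟨K, fun k hk h0 a ha => ?_⟩
  obtain ⟨b, hb, hab⟩ := Set.mem_iUnion₂.1 (htc (show a ∈ Metric.closedBall 0 1 by simpa using ha))
  have hab' : n * ‖a - b‖ ≤ n * δ := by
    rw [Metric.mem_ball, dist_eq_norm] at hab
    gcongr
  have h1 := abs_le.1 ((hlip k a b).trans hab')
  have h2 := abs_le.1 ((hlipN a b).trans hab')
  have h3 := abs_lt.1 (hK k hk h0 b hb)
  rw [abs_lt]
  constructor <;> linarith

/-- Every normalized block basis has a subsequence that admits a spreading model. -/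
lemma exists_spreading {X : Type*} [NormedAddCommGroup X] [NormedSpace ℝ X] {e u : ℕ → X} {C : ℝ}
    (hC : ∀ (m n : ℕ) (b : ℕ → ℝ), m ≤ n →
      ‖∑ i ∈ Finset.range m, b i • e i‖ ≤ C * ‖∑ i ∈ Finset.range n, b i • e i‖)
    (hu : IsBlockBasis e u) (hu1 : ∀ i, ‖u i‖ = 1) :
    ∃ φ : ℕ → ℕ, StrictMono φ ∧ ∃ (S : Type) (_ : NormedAddCommGroup S) (_ : NormedSpace ℝ S)
      (_ : CompleteSpace S) (s : ℕ → S), IsSpreadingModel (u ∘ φ) s := by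
  classical
  obtain ⟨φ, hφ, hl⟩ := exists_asymptotic hu1
  choose N hN using hl
  have hx : ∀ i, ‖(u ∘ φ) i‖ = 1 := fun i => hu1 _
  have hadd : ∀ f g, N (f + g) ≤ N f + N g := fun f g =>
    le_of_tendsto_of_tendsto' (hN (f + g)) ((hN f).add (hN g)) fun k => by
      rw [lc, map_add]; exact norm_add_le _ _
  have hsmul : ∀ (r : ℝ) f, N (r • f) = ‖r‖ * N f := fun r f => by
    refine tendsto_nhds_unique (hN (r • f)) (((hN f).const_mul ‖r‖).congr fun k => ?_)
    rw [lc, lc, map_smul, norm_smul]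
  obtain ⟨S, i1, i2, i3, J, hJ⟩ := exists_banach_of_seminorm (Seminorm.of N hadd hsmul)
  have hJ' : ∀ f, ‖J f‖ = N f := hJ
  let s : ℕ → S := fun i => J (Finsupp.single i 1)
  have hunif := fun n : ℕ => exists_uniform hx N hN n (η := 1 / ((n : ℝ) + 1)) (by positivity)
  choose K hK using hunif
  let ψ : ℕ → ℕ := fun j => j + ∑ i ∈ Finset.range (j + 1), K i
  have hψ : StrictMono ψ := strictMono_nat_of_lt_succ fun j => by
    simp only [ψ]; rw [Finset.sum_range_succ _ (j + 1)]; lia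
  have hψK : ∀ n, K n ≤ ψ n := fun n => by
    simp only [ψ]; rw [Finset.sum_range_succ]; lia
  refine ⟨φ ∘ ψ, hφ.comp hψ, S, i1, i2, i3, s, ?_, fun n => 1 / ((n : ℝ) + 1), fun n => by positivity,
    ?_, tendsto_one_div_add_atTop_nhds_zero_nat, ?_⟩
  · refine ⟨C, fun m n hmn a => ?_⟩
    have hs : ∀ m, ∑ i ∈ Finset.range m, a i • s i = J (coeffs fun i : Fin m => a i) := fun m => by
      rw [map_coeffs, Finset.sum_range]
    rw [hs, hs, hJ', hJ']
    refine le_of_tendsto_of_tendsto (hN _) ((hN _).const_mul C) ?_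
    refine eventually_farSeq.2 ⟨0, fun k hk _ => ?_⟩
    simp only [lc_coeffs]
    have := block_const hC ((hu.comp hφ).comp hk) m n a hmn
    simpa only [Finset.sum_range, Function.comp] using this
  · intro m n hmn
    have : (m : ℝ) ≤ n := by exact_mod_cast hmn
    change 1 / ((n : ℝ) + 1) ≤ 1 / ((m : ℝ) + 1)
    gcongr
  · intro n a ha k hk hnk
    rcases Nat.eq_zero_or_pos n with rfl | hn
    · simp
    -- prolong the finite sequence `k` to an infinite increasing one
    let k' : ℕ → ℕ := fun i => if h : i < n then k ⟨i, h⟩ else k ⟨n - 1, by lia⟩ + i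
    have hk' : StrictMono k' := by
      refine strictMono_nat_of_lt_succ fun i => ?_
      by_cases h1 : i + 1 < n
      · simp only [k', dif_pos h1, dif_pos (show i < n by lia)]
        exact hk (by simp [Fin.lt_def])
      · by_cases h2 : i < n
        · simp only [k', dif_neg h1, dif_pos h2]
          have : (⟨i, h2⟩ : Fin n) = ⟨n - 1, by lia⟩ := by ext; simp; lia
          rw [this]; lia
        · simp only [k', dif_neg h1, dif_neg h2]; lia
    have h0 : K n ≤ (ψ ∘ k') 0 := by
      refine (hψK n).trans (hψ.monotone ?_)
      simp only [k', dif_pos hn]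
      exact hnk _
    have := hK n (ψ ∘ k') (hψ.comp hk') h0 a ((pi_norm_le_iff_of_nonneg zero_le_one).2 ha)
    rw [lc_coeffs, ← hJ', map_coeffs] at this
    have h2 : ∀ i : Fin n, k' i = k i := fun i => by simp [k']
    simpa only [Function.comp, h2] using this

/-! ### Pairs of blocks -/

lemma IsBlockBasis.normalize {X : Type*} [NormedAddCommGroup X] [NormedSpace ℝ X]
    {e x : ℕ → X} (hx : IsBlockBasis e x) : IsBlockBasis e (fun j => ‖x j‖⁻¹ • x j) := by
  classical
  obtain ⟨E, a, hne, hlt, hsum, h0⟩ := hx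
  have hlt' := block_lt hne hlt
  have huniq : ∀ i j t, t ∈ E i → t ∈ E j → i = j := by
    intro i j t hi hj
    rcases lt_trichotomy i j with h | h | h
    · exact absurd (hlt' i j h t hi t hj) (lt_irrefl _)
    · exact h
    · exact absurd (hlt' j i h t hj t hi) (lt_irrefl _)
  refine ⟨E, fun t => if h : ∃ j, t ∈ E j then ‖x h.choose‖⁻¹ * a t else 0, hne, hlt, fun j => ?_,
    fun j => smul_ne_zero (inv_ne_zero (norm_ne_zero_iff.2 (h0 j))) (h0 j)⟩
  have hj : ‖x j‖⁻¹ • x j = ∑ t ∈ E j, ‖x j‖⁻¹ • a t • e t := by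
    rw [← Finset.smul_sum, ← hsum j]
  refine hj.trans ?_
  refine Finset.sum_congr rfl fun t ht => ?_
  have hex : ∃ j, t ∈ E j := ⟨j, ht⟩
  beta_reduce
  rw [dif_pos hex, huniq _ _ t hex.choose_spec ht, mul_smul]

lemma IsSpreadingModel.exists_pair {X : Type*} [NormedAddCommGroup X] [NormedSpace ℝ X]
    {S : Type*} [NormedAddCommGroup S] [NormedSpace ℝ S] {x : ℕ → X} {s : ℕ → S}
    (h : IsSpreadingModel x s) {η : ℝ} (hη : 0 < η) :
    ∃ j k, j < k ∧ ‖x j + x k‖ < ‖s 0 + s 1‖ + η := by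
  obtain ⟨-, ε, -, hε, hε0, hs⟩ := h
  obtain ⟨n, hn⟩ := (hε0.eventually (gt_mem_nhds hη)).exists
  have hn2 : ε (n + 2) < η := (hε (by lia)).trans_lt hn
  -- padding the coefficients `(1, 1)` with zeros makes the error as small as desired
  have := hs (n + 2) (Fin.cons 1 (Fin.cons 1 0)) (by
    intro i
    refine Fin.cases (by simp) (fun i => ?_) i
    refine Fin.cases (by simp) (fun i => ?_) i
    simp) (fun i => n + 2 + i) (fun i j hij => by simpa using hij) (fun i => by lia)
  simp only [Fin.sum_univ_succ, Fin.cons_zero, Fin.cons_succ, Pi.zero_apply, zero_smul,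
    Finset.sum_const_zero, add_zero, one_smul, Fin.val_zero, Fin.val_succ, zero_add] at this
  refine ⟨n + 2, n + 2 + 1, by lia, ?_⟩
  linarith [(abs_lt.1 this).2]

/-- Among successive blocks of norm at most `B` there are two whose sum has norm at most `B + δ`. -/
lemma exists_pair {X : Type*} [NormedAddCommGroup X] [NormedSpace ℝ X] {e : ℕ → X} {C : ℝ}
    (hC : ∀ (m n : ℕ) (b : ℕ → ℝ), m ≤ n →
      ‖∑ i ∈ Finset.range m, b i • e i‖ ≤ C * ‖∑ i ∈ Finset.range n, b i • e i‖)
    (h : ∀ y : ℕ → X, IsBlockBasis e y → (∀ j, ‖y j‖ = 1) →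
      ∀ (S : Type) [NormedAddCommGroup S] [NormedSpace ℝ S] [CompleteSpace S]
        (s : ℕ → S), IsSpreadingModel y s → ‖s 0 + s 1‖ = 1)
    {x : ℕ → X} (hx : IsBlockBasis e x) {B : ℝ} (hB : ∀ j, ‖x j‖ ≤ B) {δ : ℝ} (hδ : 0 < δ) :
    ∃ j k, j < k ∧ ‖x j + x k‖ ≤ B + δ := by
  have hx0 : ∀ j, x j ≠ 0 := by obtain ⟨E, a, -, -, -, h0⟩ := hx; exact h0
  have hBpos : 0 < B := (norm_pos_iff.2 (hx0 0)).trans_le (hB 0)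
  have hu := hx.normalize
  have hu1 : ∀ j, ‖‖x j‖⁻¹ • x j‖ = 1 := fun j => norm_smul_inv_norm (𝕜 := ℝ) (hx0 j)
  obtain ⟨φ, hφ, S, i1, i2, i3, s, hs⟩ := exists_spreading hC hu hu1
  have hs1 := h _ (hu.comp hφ) (fun j => hu1 _) S s hs
  obtain ⟨j, k, hjk, hlt⟩ := hs.exists_pair (div_pos hδ hBpos)
  refine ⟨φ j, φ k, hφ hjk, ?_⟩
  rw [hs1] at hlt
  simp only [Function.comp] at hlt
  -- `‖r u + t v‖ ≤ min r t * ‖u + v‖ + |r - t|` for unit vectors `u`, `v`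
  have key : ∀ (u v : X) (r t : ℝ), ‖u‖ = 1 → 0 ≤ r → r ≤ t → t ≤ B → ‖v + u‖ < 1 + δ / B →
      ‖t • u + r • v‖ ≤ B + δ := by
    intro u v r t hu hr hrt htB hlt
    have : t • u + r • v = r • (v + u) + (t - r) • u := by module
    rw [this]
    refine (norm_add_le _ _).trans ?_
    rw [norm_smul, norm_smul, hu, Real.norm_of_nonneg hr, Real.norm_of_nonneg (by linarith)]
    have h1 : r * ‖v + u‖ ≤ r * (1 + δ / B) := by gcongr
    have h2 : r * (δ / B) ≤ B * (δ / B) := by gcongr; linarith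
    have h3 : B * (δ / B) = δ := by field_simp
    linarith
  have hr : ∀ j, x j = ‖x j‖ • (‖x j‖⁻¹ • x j) := fun j => by
    rw [smul_smul, mul_inv_cancel₀ (norm_ne_zero_iff.2 (hx0 j)), one_smul]
  rw [hr (φ j), hr (φ k)]
  rcases le_total ‖x (φ j)‖ ‖x (φ k)‖ with hle | hle
  · rw [add_comm]
    exact key _ _ _ _ (hu1 _) (norm_nonneg _) hle (hB _) hlt
  · rw [add_comm] at hlt
    exact key _ _ _ _ (hu1 _) (norm_nonneg _) hle (hB _) hlt

/-! ### Fronts with bounded sums and their doubling -/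

/-- A front on `M`, given by the length `p L` of the initial segment of `L` that belongs to it.
Local: `p L` only depends on that initial segment. Monotone: dropping the first term of `L` moves
the end of the segment no earlier. Bounded: the vectors `y` indexed by the segment have a sum of
norm at most `B`. -/
structure Good {X : Type*} [NormedAddCommGroup X] (y : ℕ → X) (B : ℝ) (M : Set ℕ)
    (p : (ℕ → ℕ) → ℕ) : Prop where
  loc : ∀ L L', SeqIn L M → SeqIn L' M → (∀ i < p L, L' i = L i) → p L' = p L
  mono : ∀ L, SeqIn L M → p L ≤ p (fun i => L (i + 1)) + 1
  pos : ∀ L, SeqIn L M → 1 ≤ p L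
  bound : ∀ L, SeqIn L M → ‖∑ i ∈ Finset.range (p L), y (L i)‖ ≤ B

/-- The front consisting of two successive members of the front `p`. -/
def dbl (p : (ℕ → ℕ) → ℕ) (L : ℕ → ℕ) : ℕ := p L + p (fun i => L (i + p L))

section Good

variable {X : Type*} [NormedAddCommGroup X] {y : ℕ → X} {B : ℝ} {M : Set ℕ} {p : (ℕ → ℕ) → ℕ}

lemma Good.subset (h : Good y B M p) {M' : Set ℕ} (hM : M' ⊆ M) : Good y B M' p where
  loc L L' hL hL' := h.loc L L' (hL.mono hM) (hL'.mono hM)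
  mono L hL := h.mono L (hL.mono hM)
  pos L hL := h.pos L (hL.mono hM)
  bound L hL := h.bound L (hL.mono hM)

lemma Good.le_bound (h : Good y B M p) {B' : ℝ} (hB : B ≤ B') : Good y B' M p :=
  { h with bound := fun L hL => (h.bound L hL).trans hB }

lemma Good.le_shift (h : Good y B M p) {L : ℕ → ℕ} (hL : SeqIn L M) (r : ℕ) :
    p L ≤ r + p (fun i => L (i + r)) := by
  induction r with
  | zero => simp
  | succ r ih =>
    have := h.mono _ (hL.shift r)
    have h2 : (fun i => L (i + 1 + r)) = fun i => L (i + (r + 1)) := by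
      funext i; congr 1; lia
    simp only [h2] at this
    lia

lemma Good.dbl_loc (h : Good y B M p) {L L' : ℕ → ℕ} (hL : SeqIn L M) (hL' : SeqIn L' M)
    (hLL : ∀ i < dbl p L, L' i = L i) : dbl p L' = dbl p L := by
  have h1 : p L' = p L := h.loc L L' hL hL' fun i hi => hLL i (by simp only [dbl]; lia)
  have h2 := h.loc _ _ (hL.shift (p L)) (hL'.shift (p L)) fun i hi => hLL _ (by simp only [dbl]; lia)
  simp only [dbl, h1, h2]

lemma Good.dbl_mono (h : Good y B M p) {L : ℕ → ℕ} (hL : SeqIn L M) :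
    dbl p L ≤ dbl p (fun i => L (i + 1)) + 1 := by
  have h1 := h.mono L hL
  have h2 := h.le_shift (hL.shift (p L)) (p (fun i => L (i + 1)) + 1 - p L)
  have h3 : (fun i => L (i + (p (fun i => L (i + 1)) + 1 - p L) + p L))
      = fun i => L (i + p (fun i => L (i + 1)) + 1) := by
    funext i; congr 1; lia
  simp only [h3] at h2
  simp only [dbl]
  lia

/-- Members of `dbl p` reach beyond the end of the member of `p` in the shifted sequence. -/
lemma Good.shift_lt_dbl (h : Good y B M p) {L : ℕ → ℕ} (hL : SeqIn L M) :
    p (fun i => L (i + 1)) + 1 ≤ dbl p L := by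
  have h0 := h.pos L hL
  have h2 := h.le_shift (hL.shift 1) (p L - 1)
  have h3 : (fun i => L (i + (p L - 1) + 1)) = fun i => L (i + p L) := by
    funext i; congr 1; lia
  simp only [h3] at h2
  simp only [dbl]
  lia

/-- Doubling is monotone in the front. -/
lemma dbl_le_dbl {p' : (ℕ → ℕ) → ℕ} (h : Good y B M p') (hle : ∀ L, SeqIn L M → p L ≤ p' L)
    {L : ℕ → ℕ} (hL : SeqIn L M) : dbl p L ≤ dbl p' L := by
  have h1 := hle L hL
  have h2 := hle _ (hL.shift (p L))
  have h3 := h.le_shift (hL.shift (p L)) (p' L - p L)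
  have h4 : (fun i => L (i + (p' L - p L) + p L)) = fun i => L (i + p' L) := by
    funext i; congr 1; lia
  simp only [h4] at h3
  simp only [dbl]
  lia

/-- Among successive finite sums of the vectors `y` along an increasing sequence, all of norm at
most `B`, some two add up to a vector of norm at most `B + δ`. -/
def PairProp (y : ℕ → X) : Prop := ∀ (L q : ℕ → ℕ) (B δ : ℝ), StrictMono L → StrictMono q →
  (∀ j, ‖∑ i ∈ Finset.Ico (q j) (q (j + 1)), y (L i)‖ ≤ B) → 0 < δ →
  ∃ j k, j < k ∧ ‖∑ i ∈ Finset.Ico (q j) (q (j + 1)), y (L i)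
    + ∑ i ∈ Finset.Ico (q k) (q (k + 1)), y (L i)‖ ≤ B + δ

/-- Doubling a bounded front costs arbitrarily little in the bound, after passing to a smaller
infinite set: otherwise, by Ramsey, all pairs of successive members have large sums, which
contradicts `PairProp`. -/
lemma Good.double (hy : PairProp y) (h : Good y B M p) (hM : M.Infinite) {δ : ℝ} (hδ : 0 < δ) :
    ∃ M' ⊆ M, M'.Infinite ∧ Good y (B + δ) M' (dbl p) := by
  obtain ⟨N, hNM, hN, hcase⟩ := open_ramsey
    (fun L => B + δ < ‖∑ i ∈ Finset.range (dbl p L), y (L i)‖) M hM (by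
      intro L hL hO
      refine ⟨dbl p L, fun L' hL' hLL => ?_⟩
      rw [h.dbl_loc hL hL' hLL, Finset.sum_congr rfl fun i hi => by
        rw [hLL i (Finset.mem_range.1 hi)]]
      exact hO)
  have h' := h.subset hNM
  rcases hcase with hbad | hgood
  · exfalso
    obtain ⟨L, hL⟩ := exists_seqIn hN
    let q : ℕ → ℕ := fun j => Nat.rec 0 (fun _ r => r + p (fun i => L (i + r))) j
    have hq : ∀ j, q (j + 1) = q j + p (fun i => L (i + q j)) := fun j => rfl
    have hqm : StrictMono q := strictMono_nat_of_lt_succ fun j => by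
      rw [hq]; have := h'.pos _ (hL.shift (q j)); lia
    have hx : ∀ j, ∑ i ∈ Finset.Ico (q j) (q (j + 1)), y (L i)
        = ∑ i ∈ Finset.range (p (fun i => L (i + q j))), y (L (i + q j)) := fun j => by
      rw [Finset.sum_Ico_eq_sum_range, hq, Nat.add_sub_cancel_left]
      exact Finset.sum_congr rfl fun i _ => by rw [add_comm]
    obtain ⟨j, k, hjk, hle⟩ := hy L q B δ hL.1 hqm
      (fun j => by rw [hx]; exact h'.bound _ (hL.shift (q j))) hδ
    rw [hx, hx] at hle
    -- the block `j` of `L` followed by the tail of `L` from the block `k` on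
    let a := p (fun i => L (i + q j))
    have haq : q j + a ≤ q k := by
      have : q (j + 1) ≤ q k := hqm.monotone hjk
      rw [hq] at this; exact this
    let L' : ℕ → ℕ := fun i => if i < a then L (i + q j) else L (i - a + q k)
    have hL' : SeqIn L' N := by
      constructor
      · intro i i' hii
        simp only [L']
        split_ifs <;> first | lia | exact hL.1 (by lia)
      · intro i; simp only [L']; split_ifs <;> exact hL.2 _
    have hp : p L' = a := h'.loc _ _ (hL.shift (q j)) hL' fun i hi => by
      simp only [L', a, if_pos hi]
    have hs : (fun i => L' (i + a)) = fun i => L (i + q k) := by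
      funext i
      simp [L']
    have hb := hbad L' hL'
    rw [dbl, hp, hs, Finset.sum_range_add] at hb
    have h1 : ∀ i, L' (a + i) = L (i + q k) := fun i => by rw [add_comm a i]; exact congrFun hs i
    rw [Finset.sum_congr rfl fun i (hi : i ∈ Finset.range a) => by
      rw [show L' i = L (i + q j) from if_pos (Finset.mem_range.1 hi)]] at hb
    simp only [h1] at hb
    exact absurd hb (not_lt.2 hle)
  · exact ⟨N, hNM, hN, fun L L' hL hL' hLL => h'.dbl_loc hL hL' hLL, fun L hL => h'.dbl_mono hL,
      fun L hL => (h'.pos L hL).trans (Nat.le_add_right _ _), fun L hL => not_lt.1 (hgood L hL)⟩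

end Good

/-! ### Fronts that dominate a well-founded tree -/

/-- `Dom r p M x L k`: every descent in the tree `r` from the node `x` can be matched by terms of
sequences in `M`. The first `k` terms of `L` are already read; for each child `x'` of `x` any
sufficiently large next term may be read, and the number of terms read never exceeds the length of
the member of the front `p`. Informally, beyond the segment already read, the rank of the front `p`
is at least that of the node `x`. -/
inductive Dom {α : Type*} (r : α → α → Prop) (p : (ℕ → ℕ) → ℕ) (M : Set ℕ) :
    α → (ℕ → ℕ) → ℕ → Prop
  | mk (x : α) (L : ℕ → ℕ) (k : ℕ) (hk : k ≤ p L) (K : α → ℕ)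
      (h : ∀ x', r x' x → ∀ L', SeqIn L' M → (∀ i < k, L' i = L i) → K x' ≤ L' k →
        Dom r p M x' L' (k + 1)) : Dom r p M x L k

section Dom

variable {α : Type*} {r : α → α → Prop} {p p' : (ℕ → ℕ) → ℕ} {M M' : Set ℕ}

lemma Dom.subset (hM : M' ⊆ M) {x : α} {L : ℕ → ℕ} {k : ℕ} (hD : Dom r p M x L k) :
    Dom r p M' x L k := by
  induction hD with
  | mk x L k hk K _ ih =>
    exact .mk x L k hk K fun x' hx' L' hL' hLL hK => ih x' hx' L' (hL'.mono hM) hLL hK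

/-- Prefixing all sequences with a fixed first term `c`. -/
lemma Dom.shift (c : ℕ) (h : ∀ L, SeqIn L M' → L 0 = c →
      SeqIn (fun i => L (i + 1)) M ∧ p (fun i => L (i + 1)) + 1 ≤ p' L)
    {x : α} {L₀ : ℕ → ℕ} {k : ℕ} (hD : Dom r p M x L₀ k) :
    ∀ L, SeqIn L M' → L 0 = c → L₀ = (fun i => L (i + 1)) → Dom r p' M' x L (k + 1) := by
  induction hD with
  | mk x L₀ k hk K _ ih =>
    rintro L hL hc rfl
    refine .mk x L (k + 1) ((Nat.add_le_add_right hk 1).trans (h L hL hc).2) K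
      fun x' hx' L' hL' hLL hK => ?_
    have hc' : L' 0 = c := (hLL 0 (Nat.succ_pos k)).trans hc
    exact ih x' hx' (fun i => L' (i + 1)) (h L' hL' hc').1 (fun i hi => hLL (i + 1) (by lia)) hK
      L' hL' hc' rfl

variable {X : Type*} [NormedAddCommGroup X] {y : ℕ → X}

/-- Any bounded front can be enlarged, at an arbitrarily small cost in the bound, to one that
dominates a given well-founded node. At a node `x`, the countably many children are dominated one
after the other by an increasing sequence of fronts `Q k` on decreasing sets `W k`; the new front
is the double of `Q k` on the sequences whose first term is the `k`-th term of a diagonal set. -/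
theorem exists_dominating [Countable α] (hy : PairProp y) {x : α} (hx : Acc r x) :
    ∀ (B ε : ℝ) (M : Set ℕ) (p : (ℕ → ℕ) → ℕ), 0 < ε → M.Infinite → Good y B M p →
      ∃ M' ⊆ M, M'.Infinite ∧ ∃ p', Good y (B + ε) M' p' ∧ (∀ L, SeqIn L M' → p L ≤ p' L) ∧
        ∀ L, SeqIn L M' → Dom r p' M' x L 0 := by
  induction hx with
  | intro x _ ih =>
  intro B ε M p hε hM hp
  classical
  have : Nonempty α := ⟨x⟩
  obtain ⟨en, hen⟩ := exists_surjective_nat α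
  let St : Type := {t : ℝ × Set ℕ × ((ℕ → ℕ) → ℕ) //
    t.1 < B + ε ∧ t.2.1.Infinite ∧ Good y t.1 t.2.1 t.2.2}
  have step : ∀ (k : ℕ) (t : St), ∃ t' : St, t'.1.2.1 ⊆ t.1.2.1 ∧
      (∀ L, SeqIn L t'.1.2.1 → t.1.2.2 L ≤ t'.1.2.2 L) ∧
      (r (en k) x → ∀ L, SeqIn L t'.1.2.1 → Dom r t'.1.2.2 t'.1.2.1 (en k) L 0) ∧
      Good y (B + ε) t'.1.2.1 (dbl t'.1.2.2) := by
    rintro k ⟨⟨b, M₁, p₁⟩, hb, hM₁, hp₁⟩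
    simp only at hb hM₁ hp₁
    -- half of the remaining budget pays for the child, the other half for the doubling
    set η := (B + ε - b) / 2 with hη
    have hη0 : 0 < η := by rw [hη]; linarith
    have hchild : ∃ M₂ ⊆ M₁, M₂.Infinite ∧ ∃ p₂, Good y (b + η) M₂ p₂ ∧
        (∀ L, SeqIn L M₂ → p₁ L ≤ p₂ L) ∧
        (r (en k) x → ∀ L, SeqIn L M₂ → Dom r p₂ M₂ (en k) L 0) := by
      by_cases hr : r (en k) x
      · obtain ⟨M₂, h1, h2, p₂, h3, h4, h5⟩ := ih (en k) hr b η M₁ p₁ hη0 hM₁ hp₁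
        exact ⟨M₂, h1, h2, p₂, h3, h4, fun _ => h5⟩
      · exact ⟨M₁, le_rfl, hM₁, p₁, hp₁.le_bound (by linarith), fun _ _ => le_rfl,
          fun h => absurd h hr⟩
    obtain ⟨M₂, h1, h2, p₂, h3, h4, h5⟩ := hchild
    obtain ⟨M₃, h6, h7, h8⟩ := h3.double hy h2 hη0
    refine ⟨⟨⟨b + η, M₃, p₂⟩, by simp only [hη]; linarith, h7, h3.subset h6⟩, h6.trans h1,
      fun L hL => h4 L (hL.mono h6), fun hr L hL => (h5 hr L (hL.mono h6)).subset h6,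
      h8.le_bound (by simp only [hη]; linarith)⟩
  choose f hf1 hf2 hf3 hf4 using step
  let A : ℕ → St := fun k => Nat.rec ⟨⟨B, M, p⟩, by simpa using hε, hM, hp⟩ (fun k t => f k t) k
  have hA : ∀ k, A (k + 1) = f k (A k) := fun k => rfl
  let W : ℕ → Set ℕ := fun k => (A (k + 1)).1.2.1
  let Q : ℕ → (ℕ → ℕ) → ℕ := fun k => (A (k + 1)).1.2.2
  have hWM : W 0 ⊆ M := hf1 0 (A 0)
  have hpQ : ∀ L, SeqIn L (W 0) → p L ≤ Q 0 L := hf2 0 (A 0)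
  have hWinf : ∀ k, (W k).Infinite := fun k => (A (k + 1)).2.2.1
  have hWanti : Antitone W := antitone_nat_of_succ_le fun k => hf1 (k + 1) (A (k + 1))
  have hQgood : ∀ k, Good y ((A (k + 1)).1.1) (W k) (Q k) := fun k => (A (k + 1)).2.2.2
  have hQdbl : ∀ k, Good y (B + ε) (W k) (dbl (Q k)) := fun k => hf4 k (A k)
  have hQdom : ∀ k, r (en k) x → ∀ L, SeqIn L (W k) → Dom r (Q k) (W k) (en k) L 0 :=
    fun k => hf3 k (A k)
  have hQmono : ∀ k l, k ≤ l → ∀ L, SeqIn L (W l) → Q k L ≤ Q l L := by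
    intro k l hkl
    induction l, hkl using Nat.le_induction with
    | base => exact fun _ _ => le_rfl
    | succ l _ ihl =>
      exact fun L hL => (ihl L (hL.mono (hWanti (Nat.le_succ l)))).trans
        (hf2 (l + 1) (A (l + 1)) L hL)
  have hnext : ∀ k a, ∃ n ∈ W k, a < n := fun k a => (hWinf k).exists_gt a
  choose g hgW hg using hnext
  let m : ℕ → ℕ := fun k => Nat.rec (g 0 0) (fun k a => g (k + 1) a) k
  have hm1 : ∀ k, m (k + 1) = g (k + 1) (m k) := fun k => rfl
  have hmm : StrictMono m := strictMono_nat_of_lt_succ fun k => by rw [hm1]; exact hg _ _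
  have hmW : ∀ k, m k ∈ W k := by
    rintro (_ | k)
    · exact hgW 0 0
    · rw [hm1]; exact hgW _ _
  let κ : ℕ → ℕ := Function.invFun m
  have hκ : ∀ k, κ (m k) = k := Function.leftInverse_invFun hmm.injective
  have hkey : ∀ L, SeqIn L (Set.range m) → ∃ k, L 0 = m k ∧ κ (L 0) = k ∧ SeqIn L (W k) := by
    intro L hL
    obtain ⟨k, hk⟩ := hL.2 0
    refine ⟨k, hk.symm, by rw [← hk, hκ], hL.1, fun i => ?_⟩
    obtain ⟨l, hl⟩ := hL.2 i
    have : m k ≤ m l := by rw [hk, hl]; exact hL.1.monotone (Nat.zero_le i)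
    rw [← hl]
    exact hWanti (hmm.le_iff_le.1 this) (hmW l)
  refine ⟨Set.range m, ?_, Set.infinite_range_of_injective hmm.injective,
    fun L => dbl (Q (κ (L 0))) L, ⟨?_, ?_, ?_, ?_⟩, ?_, ?_⟩
  · rintro _ ⟨k, rfl⟩
    exact hWM (hWanti (Nat.zero_le k) (hmW k))
  · intro L L' hL hL' hLL
    obtain ⟨k, h1, h2, h3⟩ := hkey L hL
    obtain ⟨k', h1', h2', h3'⟩ := hkey L' hL'
    have h0 : L' 0 = L 0 := hLL 0 (by
      have := (hQdbl k).pos L h3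
      simp only [h2]; lia)
    have hkk : k' = k := by rw [← h2, ← h2', h0]
    subst hkk
    simp only [h2, h2'] at hLL ⊢
    exact (hQdbl k').loc L L' h3 h3' hLL
  · intro L hL
    obtain ⟨k, h1, h2, h3⟩ := hkey L hL
    obtain ⟨l, h1', h2', h3'⟩ := hkey _ (hL.shift 1)
    have hkl : k ≤ l := hmm.le_iff_le.1 (by rw [← h1, ← h1']; exact hL.1.monotone (by lia))
    simp only [h2, h2']
    exact ((hQdbl k).mono L h3).trans
      (Nat.add_le_add_right (dbl_le_dbl (hQgood l) (hQmono k l hkl) h3') 1)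
  · intro L hL
    obtain ⟨k, h1, h2, h3⟩ := hkey L hL
    simp only [h2]
    exact (hQdbl k).pos L h3
  · intro L hL
    obtain ⟨k, h1, h2, h3⟩ := hkey L hL
    simp only [h2]
    exact (hQdbl k).bound L h3
  · intro L hL
    obtain ⟨k, h1, h2, h3⟩ := hkey L hL
    simp only [h2]
    exact ((hpQ L (h3.mono (hWanti (Nat.zero_le k)))).trans
      (hQmono 0 k (Nat.zero_le k) L h3)).trans (Nat.le_add_right _ _)
  · intro L hL
    choose j hj using hen
    refine .mk x L 0 (Nat.zero_le _) (fun x' => m (j x')) fun x' hx' L' hL' _ hK => ?_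
    obtain ⟨k, h1, h2, h3⟩ := hkey L' hL'
    have hjk : j x' ≤ k := hmm.le_iff_le.1 (h1 ▸ hK)
    have hD := hQdom (j x') (by rwa [hj]) _ ((h3.mono (hWanti hjk)).shift 1)
    rw [hj] at hD
    refine Dom.shift (m k) ?_ hD L' hL' h1 rfl
    intro L₁ hL₁ hc
    obtain ⟨k₁, h1', h2', h3'⟩ := hkey L₁ hL₁
    have hkk : k₁ = k := hmm.injective (by rw [← h1', hc])
    subst hkk
    refine ⟨(h3'.mono (hWanti hjk)).shift 1, ?_⟩
    simp only [h2']
    exact (Nat.add_le_add_right (hQmono _ _ hjk _ (h3'.shift 1)) 1).trans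
      ((hQgood k₁).shift_lt_dbl h3')

end Dom

/-! ### A subsequence with bounded partial sums -/

/-- The list of the first `k` terms of `L`, in decreasing order. -/
def seg (L : ℕ → ℕ) (k : ℕ) : List ℕ := Nat.rec [] (fun i l => L i :: l) k

lemma seg_succ (L : ℕ → ℕ) (k : ℕ) : seg L (k + 1) = L k :: seg L k := rfl

lemma mem_seg {L : ℕ → ℕ} {k i : ℕ} (h : i ∈ seg L k) : ∃ j < k, i = L j := by
  induction k with
  | zero => exact absurd h List.not_mem_nil
  | succ k ih =>
    rw [seg_succ, List.mem_cons] at h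
    rcases h with rfl | h
    · exact ⟨k, by lia, rfl⟩
    · obtain ⟨j, hj, rfl⟩ := ih h
      exact ⟨j, by lia, rfl⟩

lemma seg_congr {L L' : ℕ → ℕ} {k : ℕ} (h : ∀ i < k, L' i = L i) : seg L' k = seg L k := by
  induction k with
  | zero => rfl
  | succ k ih => rw [seg_succ, seg_succ, h k (by lia), ih fun i hi => h i (by lia)]

lemma seg_sum {X : Type*} [AddCommMonoid X] (y : ℕ → X) (L : ℕ → ℕ) (k : ℕ) :
    ((seg L k).map y).sum = ∑ i ∈ Finset.range k, y (L i) := by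
  induction k with
  | zero => rfl
  | succ k ih => rw [seg_succ, List.map_cons, List.sum_cons, ih, Finset.sum_range_succ, add_comm]

/-- If every sequence in `N` had a partial sum larger than `2 * C`, the tree of finite subsets of `N`
with sums of norm at most `2 * C` would be well founded, and some front with bound `2` would dominate
it with one term to spare. Segments of a sequence that are no longer than its member of the front
have sums of norm at most `2 * C`, so they are nodes of the tree. Hence the descent provided by `Dom`
can always be continued, which is absurd because `Dom` is inductive. -/
theorem exists_bounded_seq {X : Type*} [NormedAddCommGroup X] {y : ℕ → X} {C : ℝ} (hC : 0 < C)
    (hproj : ∀ L : ℕ → ℕ, StrictMono L → ∀ m n, m ≤ n →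
      ‖∑ i ∈ Finset.range m, y (L i)‖ ≤ C * ‖∑ i ∈ Finset.range n, y (L i)‖)
    (hy : PairProp y) (hy1 : ∀ i, ‖y i‖ ≤ 1) {N : Set ℕ} (hN : N.Infinite) :
    ∃ L, SeqIn L N ∧ ∀ q, ‖∑ i ∈ Finset.range q, y (L i)‖ ≤ 2 * C := by
  by_contra! hcon
  let r : List ℕ → List ℕ → Prop := fun l' l =>
    ∃ n ∈ N, (∀ i ∈ l, i < n) ∧ l' = n :: l ∧ ‖(l'.map y).sum‖ ≤ 2 * C
  have hacc : Acc r [] := by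
    rw [acc_iff_isEmpty_descending_chain]
    refine ⟨fun ⟨f, h0, hf⟩ => ?_⟩
    choose L hLN hlt hL hb using hf
    have hseg : ∀ k, f k = seg L k := by
      intro k
      induction k with
      | zero => exact h0
      | succ k ih => rw [hL, ih]; rfl
    obtain ⟨q, hq⟩ := hcon L ⟨strictMono_nat_of_lt_succ fun k =>
      hlt (k + 1) (L k) (by rw [hL]; exact List.mem_cons_self), hLN⟩
    rcases q with _ | q
    · simp only [Finset.range_zero, Finset.sum_empty, norm_zero] at hq
      linarith
    · have := hb q
      rw [hseg, seg_sum] at this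
      linarith
  have hgood : Good y 1 N (fun _ => 1) :=
    ⟨fun _ _ _ _ _ => rfl, fun _ _ => by lia, fun _ _ => le_rfl, fun L _ => by simpa using hy1 (L 0)⟩
  obtain ⟨M₁, hM₁N, hM₁, p, hp, -, hdom⟩ :=
    exists_dominating hy hacc 1 (1 / 2) N _ (by norm_num) hN hgood
  obtain ⟨M₂, hM₂, hM₂inf, hp2⟩ := hp.double hy hM₁ (δ := 1 / 2) (by norm_num)
  have hdesc : ∀ (x : List ℕ) (L : ℕ → ℕ) (k : ℕ), Dom r (dbl p) M₂ x L k →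
      ∀ k', k = k' + 1 → x = seg L k' → SeqIn L M₂ → False := by
    intro x L k hD
    induction hD with
    | mk x L k hk K _ ih =>
      rintro k' rfl rfl hL
      have hsum : ‖∑ i ∈ Finset.range (k' + 1), y (L i)‖ ≤ 2 * C := by
        refine (hproj L hL.1 _ _ hk).trans ?_
        have := hp2.bound L hL
        nlinarith
      let L' : ℕ → ℕ := fun i => if i < k' + 1 then L i else L (i + K (seg L (k' + 1)))
      have hLL : ∀ i < k' + 1, L' i = L i := fun i hi => if_pos hi
      have hL' : SeqIn L' M₂ := by
        constructor
        · intro i j hij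
          simp only [L']
          split_ifs <;> first | lia | exact hL.1 (by lia)
        · intro i; simp only [L']; split_ifs <;> exact hL.2 _
      refine ih (seg L (k' + 1)) ⟨L k', hM₁N (hM₂ (hL.2 _)), fun i hi => ?_, rfl, ?_⟩ L' hL' hLL ?_
        (k' + 1) rfl (seg_congr hLL).symm hL'
      · obtain ⟨j, hj, rfl⟩ := mem_seg hi
        exact hL.1 hj
      · rw [seg_sum]; exact hsum
      · simp only [L', lt_irrefl, if_false]
        have := hL.1.le_apply (x := k' + 1 + K (seg L (k' + 1)))
        lia
  obtain ⟨L, hL⟩ := exists_seqIn hM₂inf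
  refine hdesc [] L 1 ?_ 0 rfl rfl hL
  refine Dom.shift (L 0) ?_ (hdom _ ((hL.mono hM₂).shift 1)) L hL rfl rfl
  intro L₁ hL₁ _
  exact ⟨(hL₁.mono hM₂).shift 1, hp.shift_lt_dbl (hL₁.mono hM₂)⟩

/-- An infinite set over which all finite sums of the vectors `y` are uniformly bounded. -/
theorem exists_bounded_sums {X : Type*} [NormedAddCommGroup X] {y : ℕ → X} {C : ℝ} (hC : 0 < C)
    (hproj : ∀ L : ℕ → ℕ, StrictMono L → ∀ m n, m ≤ n →
      ‖∑ i ∈ Finset.range m, y (L i)‖ ≤ C * ‖∑ i ∈ Finset.range n, y (L i)‖)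
    (hy : PairProp y) (hy1 : ∀ i, ‖y i‖ ≤ 1) :
    ∃ m : ℕ → ℕ, StrictMono m ∧ ∀ F : Finset ℕ, ‖∑ i ∈ F, y (m i)‖ ≤ 2 * C := by
  obtain ⟨N, -, hN, hcase⟩ := open_ramsey
    (fun L => ∃ q, 2 * C < ‖∑ i ∈ Finset.range q, y (L i)‖) Set.univ Set.infinite_univ (by
      rintro L - ⟨q, hq⟩
      refine ⟨q, fun L' _ hLL => ⟨q, ?_⟩⟩
      rwa [Finset.sum_congr rfl fun i hi => by rw [hLL i (Finset.mem_range.1 hi)]])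
  have hall : ∀ L, SeqIn L N → ∀ q, ‖∑ i ∈ Finset.range q, y (L i)‖ ≤ 2 * C := by
    rcases hcase with h | h
    · obtain ⟨L, hL, hb⟩ := exists_bounded_seq hC hproj hy hy1 hN
      obtain ⟨q, hq⟩ := h L hL
      exact absurd (hb q) (not_le.2 hq)
    · intro L hL q
      by_contra hq
      exact h L hL ⟨q, not_le.1 hq⟩
  obtain ⟨m, hm⟩ := exists_seqIn hN
  refine ⟨m, hm.1, fun F => ?_⟩
  -- `F` is an initial segment of the increasing sequence `σ`
  let σ : ℕ → ℕ := fun i => if h : i < F.card then F.orderEmbOfFin rfl ⟨i, h⟩ else F.sup id + 1 + i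
  have hσF : ∀ i (h : i < F.card), F.orderEmbOfFin rfl ⟨i, h⟩ ≤ F.sup id := fun i h =>
    Finset.le_sup (f := id) (F.orderEmbOfFin_mem rfl ⟨i, h⟩)
  have hσ : StrictMono σ := by
    intro i j hij
    simp only [σ]
    by_cases h1 : i < F.card <;> by_cases h2 : j < F.card
    · rw [dif_pos h1, dif_pos h2]
      exact (F.orderEmbOfFin rfl).strictMono hij
    · rw [dif_pos h1, dif_neg h2]
      have := hσF i h1
      lia
    · lia
    · rw [dif_neg h1, dif_neg h2]; lia
  have := hall (m ∘ σ) ⟨hm.1.comp hσ, fun i => hm.2 _⟩ F.card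
  rw [Finset.sum_range] at this
  have h2 : ∑ i : Fin F.card, y ((m ∘ σ) i) = ∑ i ∈ F, y (m i) := by
    rw [← Finset.sum_coe_sort F, ← (F.orderIsoOfFin rfl).toEquiv.sum_comp]
    refine Finset.sum_congr rfl fun i _ => ?_
    simp [σ]
  rwa [h2] at this

/-! ### The normalized basis and the embedding of `c₀` -/

section Embedding

variable {X : Type*} [NormedAddCommGroup X] [NormedSpace ℝ X]

/-- The normalized basis. -/
def nbasis (e : ℕ → X) (i : ℕ) : X := ‖e i‖⁻¹ • e i

lemma nbasis_block {e : ℕ → X} (he0 : ∀ i, e i ≠ 0) : IsBlockBasis e (nbasis e) :=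
  ⟨fun j => {j}, fun j => ‖e j‖⁻¹, fun j => Finset.singleton_nonempty j, by simp,
    fun j => by simp [nbasis], fun j => by simp [nbasis, he0]⟩

lemma norm_nbasis {e : ℕ → X} (he0 : ∀ i, e i ≠ 0) (i : ℕ) : ‖nbasis e i‖ = 1 :=
  norm_smul_inv_norm (𝕜 := ℝ) (he0 i)

lemma nbasis_pairProp {e : ℕ → X} (he0 : ∀ i, e i ≠ 0) {C : ℝ}
    (hC : ∀ (m n : ℕ) (b : ℕ → ℝ), m ≤ n →
      ‖∑ i ∈ Finset.range m, b i • e i‖ ≤ C * ‖∑ i ∈ Finset.range n, b i • e i‖)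
    (h : ∀ y : ℕ → X, IsBlockBasis e y → (∀ j, ‖y j‖ = 1) →
      ∀ (S : Type) [NormedAddCommGroup S] [NormedSpace ℝ S] [CompleteSpace S]
        (s : ℕ → S), IsSpreadingModel y s → ‖s 0 + s 1‖ = 1) :
    PairProp (nbasis e) := by
  classical
  intro L q B δ hL hq hB hδ
  refine exists_pair hC h (x := fun j => ∑ i ∈ Finset.Ico (q j) (q (j + 1)), nbasis e (L i))
    ⟨fun j => (Finset.Ico (q j) (q (j + 1))).image L, fun j => ‖e j‖⁻¹, fun j => ?_, fun j => ?_,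
      fun j => ?_, fun j h0 => ?_⟩ hB hδ
  · exact (Finset.nonempty_Ico.2 (hq (Nat.lt_succ_self j))).image L
  · intro a ha b hb
    obtain ⟨i, hi, rfl⟩ := Finset.mem_image.1 ha
    obtain ⟨k, hk, rfl⟩ := Finset.mem_image.1 hb
    rw [Finset.mem_Ico] at hi hk
    exact hL (by lia)
  · rw [Finset.sum_image fun a _ b _ hab => hL.injective hab]
    rfl
  · -- the first summand of the block is controlled by the whole block
    have hqj := hq (Nat.lt_succ_self j)
    have := block_const hC ((nbasis_block he0).comp hL) (q j + 1) (q (j + 1))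
      (fun i => if q j ≤ i then 1 else 0) hqj
    have h1 : ∀ n, ∑ i ∈ Finset.range n, (if q j ≤ i then (1 : ℝ) else 0) • (nbasis e ∘ L) i
        = ∑ i ∈ Finset.Ico (q j) n, nbasis e (L i) := fun n => by
      simp only [ite_smul, one_smul, zero_smul, Function.comp]
      rw [← Finset.sum_filter]
      refine Finset.sum_congr ?_ fun _ _ => rfl
      ext i; simp [and_comm]
    beta_reduce at h0
    rw [h1, h1, h0] at this
    simp only [Nat.Ico_succ_singleton, Finset.sum_singleton, norm_nbasis he0, norm_zero,
      mul_zero] at this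
    linarith

/-- Uniformly bounded finite sums give an upper `c₀`-estimate, by testing against a norming
functional and splitting according to the sign of its values. -/
lemma norm_sum_smul_le {z : ℕ → X} {D : ℝ} (hD : ∀ F : Finset ℕ, ‖∑ i ∈ F, z i‖ ≤ D)
    (v : ℕ → ℝ) {t : ℝ} (F : Finset ℕ) (hv : ∀ i ∈ F, |v i| ≤ t) (ht : 0 ≤ t) :
    ‖∑ i ∈ F, v i • z i‖ ≤ t * (2 * D) := by
  classical
  obtain ⟨f, hf1, hf⟩ := exists_dual_vector'' ℝ (∑ i ∈ F, v i • z i)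
  have hf' : f (∑ i ∈ F, v i • z i) = ‖∑ i ∈ F, v i • z i‖ := hf
  have hle : ∀ G : Finset ℕ, |∑ i ∈ G, f (z i)| ≤ D := fun G => by
    rw [← map_sum, ← Real.norm_eq_abs]
    refine (f.le_of_opNorm_le hf1 _).trans ?_
    rw [one_mul]; exact hD G
  rw [← hf', map_sum]
  calc ∑ i ∈ F, f (v i • z i) ≤ ∑ i ∈ F, t * |f (z i)| := by
        refine Finset.sum_le_sum fun i hi => ?_
        rw [map_smul, smul_eq_mul]
        refine (le_abs_self _).trans ?_
        rw [abs_mul]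
        exact mul_le_mul_of_nonneg_right (hv i hi) (abs_nonneg _)
    _ = t * ∑ i ∈ F, |f (z i)| := by rw [Finset.mul_sum]
    _ ≤ t * (2 * D) := by
        refine mul_le_mul_of_nonneg_left ?_ ht
        rw [← Finset.sum_filter_add_sum_filter_not F (fun i => 0 ≤ f (z i))]
        have h1 : ∑ i ∈ F.filter (fun i => 0 ≤ f (z i)), |f (z i)|
            = ∑ i ∈ F.filter (fun i => 0 ≤ f (z i)), f (z i) :=
          Finset.sum_congr rfl fun i hi => abs_of_nonneg (Finset.mem_filter.1 hi).2
        have h2 : ∑ i ∈ F.filter (fun i => ¬ 0 ≤ f (z i)), |f (z i)|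
            = - ∑ i ∈ F.filter (fun i => ¬ 0 ≤ f (z i)), f (z i) := by
          rw [← Finset.sum_neg_distrib]
          exact Finset.sum_congr rfl fun i hi =>
            abs_of_neg (not_le.1 (Finset.mem_filter.1 hi).2)
        rw [h1, h2]
        have h3 := abs_le.1 (hle (F.filter (fun i => 0 ≤ f (z i))))
        have h4 := abs_le.1 (hle (F.filter (fun i => ¬ 0 ≤ f (z i))))
        linarith [h3.2, h4.1]

/-- A normalized sequence with bounded partial sum projections and uniformly bounded finite sums
spans a copy of `c₀`. -/
lemma exists_c0_embedding [CompleteSpace X] {z : ℕ → X} {C D : ℝ} (hC : 0 < C)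
    (hz1 : ∀ i, ‖z i‖ = 1)
    (hproj : ∀ (m n : ℕ) (c : ℕ → ℝ), m ≤ n →
      ‖∑ i ∈ Finset.range m, c i • z i‖ ≤ C * ‖∑ i ∈ Finset.range n, c i • z i‖)
    (hD : ∀ F : Finset ℕ, ‖∑ i ∈ F, z i‖ ≤ D) :
    ∃ T : ZeroAtInftyContinuousMap ℕ ℝ →L[ℝ] X, ∃ c : ℝ, 0 < c ∧ ∀ v, c * ‖v‖ ≤ ‖T v‖ := by
  classical
  have hvi : ∀ (v : ZeroAtInftyContinuousMap ℕ ℝ) i, |v i| ≤ ‖v‖ := fun v i =>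
    v.toBCF.norm_coe_le_norm i
  have hD0 : 0 ≤ D := (norm_nonneg _).trans (hD ∅)
  have hsum : ∀ v : ZeroAtInftyContinuousMap ℕ ℝ, Summable fun i => v i • z i := by
    intro v
    rw [summable_iff_vanishing_norm]
    intro ε hε
    set η := ε / (2 * D + 1)
    have hη : 0 < η := by positivity
    have hv := v.zero_at_infty'
    rw [Filter.cocompact_eq_cofinite] at hv
    have hfin : ∀ᶠ i in Filter.cofinite, |v i| < η := by
      have := Metric.tendsto_nhds.1 hv η hη
      simp only [Real.dist_eq, sub_zero] at this
      exact this
    rw [Filter.eventually_cofinite] at hfin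
    refine ⟨hfin.toFinset, fun t ht => ?_⟩
    refine (norm_sum_smul_le hD v t (t := η) (fun i hi => ?_) hη.le).trans_lt ?_
    · by_contra hlt
      refine Finset.disjoint_left.1 ht hi ?_
      rw [Set.Finite.mem_toFinset]
      exact fun h' => hlt h'.le
    · simp only [η]
      rw [div_mul_eq_mul_div, div_lt_iff₀ (by positivity)]
      nlinarith
  let T₀ : ZeroAtInftyContinuousMap ℕ ℝ →ₗ[ℝ] X :=
    { toFun := fun v => ∑' i, v i • z i
      map_add' := fun v w => by
        rw [← (hsum v).tsum_add (hsum w)]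
        exact tsum_congr fun i => by rw [ZeroAtInftyContinuousMap.add_apply, add_smul]
      map_smul' := fun c v => by
        rw [RingHom.id_apply, ← (hsum v).tsum_const_smul c]
        exact tsum_congr fun i => by
          rw [ZeroAtInftyContinuousMap.smul_apply, smul_eq_mul, mul_smul] }
  refine ⟨T₀.mkContinuous (2 * D) fun v => ?_, 1 / (2 * C), by positivity, fun v => ?_⟩
  · refine le_of_tendsto (hsum v).hasSum.norm (Filter.Eventually.of_forall fun F => ?_)
    rw [mul_comm]
    exact norm_sum_smul_le hD v F (fun i _ => hvi v i) (norm_nonneg v)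
  · rw [LinearMap.mkContinuous_apply]
    have hlim : Filter.Tendsto (fun n => 2 * C * ‖∑ i ∈ Finset.range n, v i • z i‖) Filter.atTop
        (nhds (2 * C * ‖T₀ v‖)) := ((hsum v).hasSum.tendsto_sum_nat.norm).const_mul _
    have hcoord : ∀ k, |v k| ≤ 2 * C * ‖T₀ v‖ := by
      intro k
      refine ge_of_tendsto hlim ?_
      filter_upwards [Filter.eventually_ge_atTop (k + 1)] with n hn
      have h1 := hproj (k + 1) n v hn
      have h2 := hproj k n v (by lia)
      have h3 : v k • z k = ∑ i ∈ Finset.range (k + 1), v i • z i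
          - ∑ i ∈ Finset.range k, v i • z i := by
        rw [Finset.sum_range_succ]; abel
      have h4 : |v k| = ‖v k • z k‖ := by rw [norm_smul, hz1, mul_one, Real.norm_eq_abs]
      rw [h4, h3]
      refine (norm_sub_le _ _).trans ?_
      linarith
    have hnorm : ‖v‖ ≤ 2 * C * ‖T₀ v‖ :=
      (BoundedContinuousFunction.norm_le (f := v.toBCF) (by positivity)).2 hcoord
    rw [one_div, inv_mul_le_iff₀ (by positivity)]
    exact hnorm

end Embedding

/-- If every spreading model `(s_n)` (in any Banach space) of every normalized block
basis of a Schauder basis `(e_i)` of a Banach space `X` satisfies `‖s 0 + s 1‖ = 1`,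
then `X` contains a closed infinite-dimensional subspace isomorphic to `c₀`, i.e.
there is a continuous linear embedding of `c₀ = C₀(ℕ, ℝ)` into `X` which is bounded
below. -/
theorem stmt1 {X : Type*} [NormedAddCommGroup X] [NormedSpace ℝ X] [CompleteSpace X]
    (e : ℕ → X) (he : IsSchauderBasis e)
    (h : ∀ y : ℕ → X, IsBlockBasis e y → (∀ j, ‖y j‖ = 1) →
      ∀ (S : Type) [NormedAddCommGroup S] [NormedSpace ℝ S] [CompleteSpace S]
        (s : ℕ → S), IsSpreadingModel y s → ‖s 0 + s 1‖ = 1) :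
    ∃ T : ZeroAtInftyContinuousMap ℕ ℝ →L[ℝ] X, ∃ c : ℝ, 0 < c ∧ ∀ v, c * ‖v‖ ≤ ‖T v‖ := by
  obtain ⟨C, hC0, hC⟩ := exists_basis_const he
  have he0 := basis_ne_zero he
  have hblock := nbasis_block he0
  obtain ⟨m, hm, hD⟩ := exists_bounded_sums hC0
    (fun L hL k n hkn => by
      simpa only [one_smul, Function.comp] using
        block_const hC (hblock.comp hL) k n (fun _ => 1) hkn)
    (nbasis_pairProp he0 hC h) (fun i => (norm_nbasis he0 i).le)
  exact exists_c0_embedding (z := nbasis e ∘ m) hC0 (fun i => norm_nbasis he0 _)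
    (block_const hC (hblock.comp hm)) hD
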